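/- Let X be the punctured Möbius band with boundary circles C₁ and C₂. Suppose f : X → X is a boundary-preserving map and there is j ∈ {1,2} such that f(∂X) ⊆ C_j and both restrictions, viewed as maps f|C₁ : C₁ → C_j and f|C₂ : C₂ → C_j, are essential. Then f is boundary-homotopic to a map g : X → X with g(X) ⊆ C_j; in particular, every fixed point of g lies on the boundary circle C_j. -/

import Mathlib

open Set

namespace PMB

/-- The square [0,1] × [−1,1] as a subspace of ℝ². -/
def Sq : Set (ℝ × ℝ) := Set.Icc 0 1 ×ˢ Set.Icc (-1) 1

/-- The identification (0,y) ∼ (1,−y) on the square. -/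
def rel (p q : Sq) : Prop :=
  (p : ℝ × ℝ) = (q : ℝ × ℝ) ∨
  ((p : ℝ × ℝ).1 = 0 ∧ (q : ℝ × ℝ).1 = 1 ∧ (p : ℝ × ℝ).2 = -(q : ℝ × ℝ).2) ∨
  ((p : ℝ × ℝ).1 = 1 ∧ (q : ℝ × ℝ).1 = 0 ∧ (q : ℝ × ℝ).2 = -(p : ℝ × ℝ).2)

/-- The Möbius band: the quotient of the square by the identification. -/
def M := Quot rel

instance : TopologicalSpace M := inferInstanceAs (TopologicalSpace (Quot rel))

/-- The quotient map. -/
def qm : Sq → M := Quot.mk rel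

/-- The open disc of radius 1/4 centred at (1/2, 0). -/
def Bdisc : Set (ℝ × ℝ) := Metric.ball (1/2, 0) (1/4)

/-- The circle of radius 1/4 centred at (1/2, 0). -/
def Scirc : Set (ℝ × ℝ) := Metric.sphere (1/2, 0) (1/4)

/-- The punctured Möbius band, as a subset of the Möbius band. -/
def Xset : Set M := {m | m ∉ qm '' {p : Sq | (p : ℝ × ℝ) ∈ Bdisc}}

/-- The punctured Möbius band as a topological space. -/
abbrev X : Type := ↥Xset

/-- The boundary circle of the Möbius band. -/
def C1 : Set X := {x | ∃ p : Sq, qm p = (x : M) ∧ ((p : ℝ × ℝ).2 = 1 ∨ (p : ℝ × ℝ).2 = -1)}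

/-- The boundary circle coming from the removed disc. -/
def C2 : Set X := {x | ∃ p : Sq, qm p = (x : M) ∧ (p : ℝ × ℝ) ∈ Scirc}

/-- The boundary of the punctured Möbius band. -/
def Bd : Set X := C1 ∪ C2

/-- A self-map of the punctured Möbius band is boundary-preserving if it sends ∂X into ∂X. -/
def BoundaryPreserving (f : C(X, X)) : Prop := MapsTo f Bd Bd

/-- Two self-maps are boundary-homotopic if there is a homotopy between them keeping
∂X inside ∂X at all times. -/
def BoundaryHomotopic (f g : C(X, X)) : Prop :=
  ∃ H : ContinuousMap.Homotopy f g, ∀ x : X, x ∈ Bd → ∀ t : unitInterval, H (t, x) ∈ Bd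

/-- A continuous map is inessential if it is homotopic to a constant map. -/
def Inessential {α β : Type*} [TopologicalSpace α] [TopologicalSpace β] (f : C(α, β)) : Prop :=
  ∃ b : β, ContinuousMap.Homotopic f (ContinuousMap.const α b)

/-- A continuous map is essential if it is not homotopic to a constant map. -/
def Essential {α β : Type*} [TopologicalSpace α] [TopologicalSpace β] (f : C(α, β)) : Prop :=
  ¬ Inessential f

/-- The restriction of a self-map of X to a subset `s` mapped into a subset `t`,
as a continuous map between the subspaces. -/
def restrictMap (f : C(X, X)) {s t : Set X} (h : MapsTo f s t) : C(s, t) :=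
  ⟨fun x => ⟨f x, h x.2⟩, Continuous.subtype_mk (f.continuous.comp continuous_subtype_val) _⟩

/-! ### The group -/

/-- The Sanov-type subgroup of `SL(2, ℤ)`. -/
def GG : Subgroup (Matrix.SpecialLinearGroup (Fin 2) ℤ) where
  carrier := {A | A.1 0 0 % 4 = 1 ∧ A.1 1 1 % 4 = 1 ∧ A.1 0 1 % 2 = 0 ∧ A.1 1 0 % 2 = 0}
  one_mem' := by simp
  mul_mem' := by
    rintro A B ⟨a1, a2, a3, a4⟩ ⟨b1, b2, b3, b4⟩
    simp only [Set.mem_ofPred_eq, Matrix.SpecialLinearGroup.coe_mul, Matrix.mul_apply,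
      Fin.sum_univ_two]
    obtain ⟨p, hp⟩ : ∃ p, A.1 0 0 = 4 * p + 1 := ⟨A.1 0 0 / 4, by omega⟩
    obtain ⟨s, hs⟩ : ∃ p, A.1 1 1 = 4 * p + 1 := ⟨A.1 1 1 / 4, by omega⟩
    obtain ⟨q, hq⟩ : ∃ p, A.1 0 1 = 2 * p := ⟨A.1 0 1 / 2, by omega⟩
    obtain ⟨r, hr⟩ : ∃ p, A.1 1 0 = 2 * p := ⟨A.1 1 0 / 2, by omega⟩
    obtain ⟨p', hp'⟩ : ∃ p, B.1 0 0 = 4 * p + 1 := ⟨B.1 0 0 / 4, by omega⟩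
    obtain ⟨s', hs'⟩ : ∃ p, B.1 1 1 = 4 * p + 1 := ⟨B.1 1 1 / 4, by omega⟩
    obtain ⟨q', hq'⟩ : ∃ p, B.1 0 1 = 2 * p := ⟨B.1 0 1 / 2, by omega⟩
    obtain ⟨r', hr'⟩ : ∃ p, B.1 1 0 = 2 * p := ⟨B.1 1 0 / 2, by omega⟩
    rw [hp, hs, hq, hr, hp', hs', hq', hr']
    refine ⟨?_, ?_, ?_, ?_⟩ <;> ring_nf <;> omega
  inv_mem' := by
    rintro A ⟨a1, a2, a3, a4⟩
    simp only [Set.mem_ofPred_eq, Matrix.SpecialLinearGroup.coe_inv, Matrix.adjugate_fin_two]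
    simp
    omega

abbrev G : Type := GG

def ep (g : G) : ℤ := g.1.1 0 0
def eq' (g : G) : ℤ := g.1.1 0 1
def er (g : G) : ℤ := g.1.1 1 0
def es (g : G) : ℤ := g.1.1 1 1

lemma ep_mul (g h : G) : ep (g * h) = ep g * ep h + eq' g * er h := by
  simp [ep, eq', er, es, Matrix.mul_apply, Fin.sum_univ_two]
lemma eq_mul (g h : G) : eq' (g * h) = ep g * eq' h + eq' g * es h := by
  simp [ep, eq', er, es, Matrix.mul_apply, Fin.sum_univ_two]
lemma er_mul (g h : G) : er (g * h) = er g * ep h + es g * er h := by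
  simp [ep, eq', er, es, Matrix.mul_apply, Fin.sum_univ_two]
lemma es_mul (g h : G) : es (g * h) = er g * eq' h + es g * es h := by
  simp [ep, eq', er, es, Matrix.mul_apply, Fin.sum_univ_two]
lemma ep_inv (g : G) : ep g⁻¹ = es g := by
  simp [ep, es, Matrix.adjugate_fin_two]
lemma es_inv (g : G) : es g⁻¹ = ep g := by
  simp [ep, es, Matrix.adjugate_fin_two]
lemma eq_inv (g : G) : eq' g⁻¹ = - eq' g := by
  simp [eq', Matrix.adjugate_fin_two]
lemma er_inv (g : G) : er g⁻¹ = - er g := by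
  simp [er, Matrix.adjugate_fin_two]
@[simp] lemma ep_one : ep 1 = 1 := by simp [ep]
@[simp] lemma eq_one : eq' 1 = 0 := by simp [eq']
@[simp] lemma er_one : er 1 = 0 := by simp [er]
@[simp] lemma es_one : es 1 = 1 := by simp [es]

lemma G_det (g : G) : ep g * es g - eq' g * er g = 1 := by
  have := g.1.2
  rw [Matrix.det_fin_two] at this
  exact this

lemma ep_mod (g : G) : ep g % 4 = 1 := g.2.1
lemma es_mod (g : G) : es g % 4 = 1 := g.2.2.1
lemma eq_mod (g : G) : eq' g % 2 = 0 := g.2.2.2.1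
lemma er_mod (g : G) : er g % 2 = 0 := g.2.2.2.2

lemma G_ext {g h : G} (h1 : ep g = ep h) (h2 : eq' g = eq' h) (h3 : er g = er h)
    (h4 : es g = es h) : g = h := by
  apply Subtype.ext
  apply Subtype.ext
  ext i j
  fin_cases i <;> fin_cases j
  · exact h1
  · exact h2
  · exact h3
  · exact h4

lemma diag_of_er {g : G} (h : er g = 0) : ep g = 1 ∧ es g = 1 := by
  have h1 := G_det g
  rw [h] at h1
  have h2 : ep g * es g = 1 := by linarith
  have h3 := ep_mod g
  have h4 := es_mod g
  rcases Int.mul_eq_one_iff_eq_one_or_neg_one.mp h2 with ⟨a, b⟩ | ⟨a, b⟩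
  · exact ⟨a, b⟩
  · omega

/-- The generators `1, x⁻¹, t⁻¹`. -/
def c : Fin 3 → G
  | 0 => 1
  | 1 => ⟨⟨!![1, -2; 0, 1], by simp [Matrix.det_fin_two]⟩, by refine ⟨?_, ?_, ?_, ?_⟩ <;> decide⟩
  | 2 => ⟨⟨!![1, 0; -2, 1], by simp [Matrix.det_fin_two]⟩, by refine ⟨?_, ?_, ?_, ?_⟩ <;> decide⟩

@[simp] lemma c_zero : c 0 = 1 := rfl
@[simp] lemma ep_c1 : ep (c 1) = 1 := rfl
@[simp] lemma eq_c1 : eq' (c 1) = -2 := rfl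
@[simp] lemma er_c1 : er (c 1) = 0 := rfl
@[simp] lemma es_c1 : es (c 1) = 1 := rfl
@[simp] lemma ep_c2 : ep (c 2) = 1 := rfl
@[simp] lemma eq_c2 : eq' (c 2) = 0 := rfl
@[simp] lemma er_c2 : er (c 2) = -2 := rfl
@[simp] lemma es_c2 : es (c 2) = 1 := rfl

/-- The arithmetic core: if `w k w` is conjugate to an upper triangular element, with `k ≠ 1`
upper triangular, then `w` is upper triangular. -/
lemma core_arith {w k u : G} (hk : er k = 0) (hk1 : k ≠ 1)
    (hu : er (u⁻¹ * (w * k * w) * u) = 0) : er w = 0 := by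
  obtain ⟨hk2, hk3⟩ := diag_of_er hk
  have hq : eq' k ≠ 0 := fun h => hk1 (G_ext (by simp [hk2]) (by simp [h]) (by simp [hk])
    (by simp [hk3]))
  obtain ⟨h1, h2⟩ := diag_of_er hu
  simp only [ep_mul, eq_mul, er_mul, es_mul, ep_inv, es_inv, eq_inv, er_inv, hk, hk2, hk3] at h1 h2
  have dw := G_det w
  have du := G_det u
  have tr : (ep w + es w) * (ep w + es w + eq' k * er w) = 4 := by
    have e1 : (ep u * es u - eq' u * er u) *
        ((ep w + es w) * (ep w + es w + eq' k * er w) - 2 * (ep w * es w - eq' w * er w)) = 2 := by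
      linear_combination h1 + h2
    rw [du, dw] at e1
    linarith
  have m1 := ep_mod w
  have m2 := es_mod w
  have m3 := er_mod w
  have m4 := eq_mod k
  obtain ⟨a, ha⟩ : ∃ a, ep w + es w = 4 * a + 2 := ⟨(ep w + es w) / 4, by omega⟩
  obtain ⟨b, hb⟩ : ∃ b, eq' k = 2 * b := ⟨eq' k / 2, by omega⟩
  obtain ⟨d, hd⟩ : ∃ d, er w = 2 * d := ⟨er w / 2, by omega⟩
  rw [ha, hb, hd] at tr
  have h5 : (2 * a + 1) * (2 * a + 1 + 2 * (b * d)) = 1 := by linarith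
  have h6 : b * d = 0 := by
    rcases Int.mul_eq_one_iff_eq_one_or_neg_one.mp h5 with ⟨a, b⟩ | ⟨a, b⟩ <;> omega
  rcases mul_eq_zero.mp h6 with h7 | h7
  · exact absurd (by rw [hb, h7]; rfl) hq
  · rw [hd, h7]; rfl

lemma er_of_conj {v u : G} (hv : er v = 0) (hv1 : v ≠ 1) (h : er (u⁻¹ * v * u) = 0) :
    er u = 0 := by
  obtain ⟨hk2, hk3⟩ := diag_of_er hv
  have hq : eq' v ≠ 0 := fun h => hv1 (G_ext (by simp [hk2]) (by simp [h]) (by simp [hv])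
    (by simp [hk3]))
  simp only [ep_mul, eq_mul, er_mul, es_mul, ep_inv, es_inv, eq_inv, er_inv, hv, hk2, hk3] at h
  have : eq' v * (er u * er u) = 0 := by linear_combination -h
  simpa [hq] using this

/-! ### The tree -/

/-- disjoint union of closed edges -/
abbrev EdgeSp : Type := Σ _ : G × Fin 3, unitInterval

def edgeRel (p q : EdgeSp) : Prop :=
  (p.2 = 0 ∧ q.2 = 0 ∧ p.1.1 = q.1.1) ∨
  (p.2 = 1 ∧ q.2 = 1 ∧ p.1.1 * c p.1.2 = q.1.1 * c q.1.2)

/-- The tree. -/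
def E : Type := Quot edgeRel

instance : TopologicalSpace E := inferInstanceAs (TopologicalSpace (Quot edgeRel))

/-- Point on the edge `(g, i)` with parameter `a` (clamped). -/
noncomputable def pt (g : G) (i : Fin 3) (a : ℝ) : E :=
  Quot.mk edgeRel ⟨(g, i), Set.projIcc 0 1 zero_le_one a⟩

lemma continuous_pt (g : G) (i : Fin 3) : Continuous (pt g i) := by
  have h1 : Continuous (Quot.mk edgeRel) := continuous_quot_mk
  have h2 : Continuous (fun a : unitInterval => (⟨(g, i), a⟩ : EdgeSp)) :=
    continuous_sigmaMk (σ := fun _ : G × Fin 3 => unitInterval) (i := (g, i))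
  exact h1.comp (h2.comp continuous_projIcc)

lemma pt_zero (g : G) (i j : Fin 3) : pt g i 0 = pt g j 0 := by
  apply Quot.sound
  left
  simp [Set.projIcc_of_le_left]

lemma pt_one {g h : G} {i j : Fin 3} (e : g * c i = h * c j) : pt g i 1 = pt h j 1 := by
  apply Quot.sound
  right
  simp [e]

lemma E_rep (e : E) : ∃ g i, ∃ a ∈ Set.Icc (0 : ℝ) 1, e = pt g i a := by
  obtain ⟨⟨⟨g, i⟩, a⟩, rfl⟩ := Quot.exists_rep e
  refine ⟨g, i, a, a.2, ?_⟩
  simp [pt]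
  rfl

lemma E_lift {Z : Type*} [TopologicalSpace Z] (β : G → Fin 3 → ℝ → Z)
    (hβ : ∀ g i, Continuous (β g i)) (zP zQ : G → Z) (h0 : ∀ g i, β g i 0 = zP g)
    (h1 : ∀ g i, β g i 1 = zQ (g * c i)) :
    ∃ m : C(E, Z), ∀ g i, ∀ a ∈ Set.Icc (0 : ℝ) 1, m (pt g i a) = β g i a := by
  let m0 : EdgeSp → Z := fun p => β p.1.1 p.1.2 p.2
  have hm0 : Continuous m0 := by
    apply continuous_sigma
    intro p
    exact (hβ p.1 p.2).comp continuous_subtype_val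
  have hm : ∀ p q, edgeRel p q → m0 p = m0 q := by
    rintro ⟨⟨g, i⟩, a⟩ ⟨⟨h, j⟩, b⟩ (⟨r1, r2, r3⟩ | ⟨r1, r2, r3⟩)
    · simp only at r1 r2 r3
      subst r1 r2 r3
      simp [m0, h0]
    · simp only at r1 r2 r3
      subst r1 r2
      simp [m0, h1, r3]
  refine ⟨⟨Quot.lift m0 hm, continuous_quot_lift hm hm0⟩, ?_⟩
  intro g i a ha
  change m0 _ = _
  simp [m0, Set.projIcc_of_mem _ ha]

lemma E_lin (zP zQ : G → ℝ) : ∃ m : C(E, ℝ), ∀ g i, ∀ a ∈ Set.Icc (0 : ℝ) 1,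
    m (pt g i a) = (1 - a) * zP g + a * zQ (g * c i) :=
  E_lift (fun g i a => (1 - a) * zP g + a * zQ (g * c i)) (fun g i => by fun_prop) zP zQ
    (by simp) (by simp)

noncomputable def lin (zP zQ : G → ℝ) : C(E, ℝ) := (E_lin zP zQ).choose

lemma lin_pt (zP zQ : G → ℝ) (g : G) (i : Fin 3) {a : ℝ} (ha : a ∈ Set.Icc (0 : ℝ) 1) :
    lin zP zQ (pt g i a) = (1 - a) * zP g + a * zQ (g * c i) :=
  (E_lin zP zQ).choose_spec g i a ha

noncomputable instance : MulAction G E where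
  smul g := Quot.map (fun p => ⟨(g * p.1.1, p.1.2), p.2⟩) (by
    rintro ⟨⟨g, i⟩, a⟩ ⟨⟨h, j⟩, b⟩ (⟨r1, r2, r3⟩ | ⟨r1, r2, r3⟩)
    · left; simp_all
    · right; simp_all [mul_assoc])
  one_smul e := by
    obtain ⟨⟨⟨g, i⟩, a⟩, rfl⟩ := Quot.exists_rep e
    change Quot.mk _ _ = _
    simp
  mul_smul g h e := by
    obtain ⟨⟨⟨k, i⟩, a⟩, rfl⟩ := Quot.exists_rep e
    change Quot.mk _ _ = Quot.mk _ _
    simp [mul_assoc]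

lemma smul_pt (g h : G) (i : Fin 3) (a : ℝ) : g • pt h i a = pt (g * h) i a := rfl

instance : ContinuousConstSMul G E where
  continuous_const_smul g := by
    have h1 : Continuous (Quot.mk edgeRel) := continuous_quot_mk
    refine continuous_quot_lift (f := fun p : EdgeSp =>
      (Quot.mk edgeRel ⟨(g * p.1.1, p.1.2), p.2⟩ : E)) ?_ ?_
    · apply h1.comp
      apply continuous_sigma
      rintro ⟨h, i⟩
      exact (continuous_sigmaMk (σ := fun _ : G × Fin 3 => unitInterval) (i := (g * h, i)))

/-- The quotient graph. -/
abbrev Y : Type := Quotient (MulAction.orbitRel G E)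

noncomputable def pY : C(E, Y) := ⟨Quotient.mk _, continuous_quotient_mk'⟩

lemma pY_cov : IsQuotientCoveringMap pY G where
  toIsQuotientMap := isQuotientMap_quotient_mk'
  continuous_const_smul := continuous_const_smul
  apply_eq_iff_mem_orbit := Quotient.eq''
  disjoint e := by
    classical
    obtain ⟨g, i, a, ha, rfl⟩ := E_rep e
    rcases lt_or_ge a 1 with h1 | h1
    · let m := lin (fun h => if h = g then 1 else 0) (fun _ => 0)
      refine ⟨{e | 0 < m e}, (isOpen_lt continuous_const m.continuous).mem_nhds ?_, ?_⟩
      · simp only [Set.mem_ofPred_eq, m]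
        rw [lin_pt _ _ _ _ ha]
        simp [h1]
      · rintro k ⟨_, ⟨e, he, rfl⟩, he'⟩
        obtain ⟨h, j, b, hb, rfl⟩ := E_rep e
        simp only [Set.mem_ofPred_eq, m, smul_pt] at he he'
        rw [lin_pt _ _ _ _ hb] at he he'
        by_cases hh : h = g
        · by_cases hk : k * h = g
          · rw [hh] at hk; simpa using hk
          · simp [hk] at he'
        · simp [hh] at he
    · have h1 : 0 < a := by linarith
      let m := lin (fun _ => 0) (fun h => if h = g * c i then 1 else 0)
      refine ⟨{e | 0 < m e}, (isOpen_lt continuous_const m.continuous).mem_nhds ?_, ?_⟩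
      · simp only [Set.mem_ofPred_eq, m]
        rw [lin_pt _ _ _ _ ha]
        simp [h1]
      · rintro k ⟨_, ⟨e, he, rfl⟩, he'⟩
        obtain ⟨h, j, b, hb, rfl⟩ := E_rep e
        simp only [Set.mem_ofPred_eq, m, smul_pt] at he he'
        rw [lin_pt _ _ _ _ hb] at he he'
        by_cases hh : h * c j = g * c i
        · by_cases hk : k * h * c j = g * c i
          · rw [mul_assoc, hh] at hk; simpa using hk
          · simp [hk] at he'
        · simp [hh] at he

lemma pY_smul (g : G) (e : E) : pY (g • e) = pY e := pY_cov.map_smul g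

lemma pY_eq {e e' : E} (h : pY e = pY e') : ∃ g : G, e = g • e' := by
  obtain ⟨g, hg⟩ := pY_cov.apply_eq_iff_mem_orbit.mp h
  exact ⟨g, hg.symm⟩

lemma smul_cancel {g h : G} {e : E} (h1 : g • e = h • e) : g = h :=
  haveI := pY_cov.isCancelSMul
  IsCancelSMul.right_cancel _ _ e h1

lemma pY_isCov : IsCoveringMap pY := pY_cov.isCoveringMap

lemma pY_lift (h : C(ℝ × ℝ, Y)) : ∃ F : C(ℝ × ℝ, E), ∀ z, pY (F z) = h z := by
  obtain ⟨e, he⟩ := pY_cov.surjective (h (0, 0))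
  obtain ⟨F, ⟨-, hF⟩, -⟩ := pY_isCov.existsUnique_continuousMap_lifts h (0, 0) e he
  exact ⟨F, fun z => congr_fun hF z⟩

/-- Two continuous lifts over a preconnected set differ by an element of the group. -/
lemma lift_unique {s : Set ℝ} (hs : IsPreconnected s) (h0 : s.Nonempty) {a b : ℝ → E}
    (ha : ContinuousOn a s) (hb : ContinuousOn b s) (h : ∀ t ∈ s, pY (a t) = pY (b t)) :
    ∃ g : G, ∀ t ∈ s, a t = g • b t := by
  obtain ⟨t0, ht0⟩ := h0
  obtain ⟨g, hg⟩ := pY_eq (h t0 ht0)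
  refine ⟨g, ?_⟩
  have := pY_isCov.eqOn_of_comp_eqOn hs ha (g₂ := fun t => g • b t)
    ((continuous_const_smul g).comp_continuousOn hb)
    (fun t ht => by simp [pY_smul, h t ht]) ht0 hg
  exact this
/-! ### Contraction of the tree onto the line `L` -/

lemma pt_le_zero (g : G) (i : Fin 3) {a : ℝ} (h : a ≤ 0) : pt g i a = pt g 0 0 := by
  rw [← pt_zero g i 0]
  simp [pt, Set.projIcc_of_le_left _ h]
  rfl

lemma pt_ge_one (g : G) (i : Fin 3) {a : ℝ} (h : 1 ≤ a) : pt g i a = pt (g * c i) 0 1 := by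
  rw [← pt_one (g := g) (i := i) (h := g * c i) (j := 0) (by simp)]
  simp [pt, Set.projIcc_of_right_le _ h]
  rfl

/-- Vertices of the tree. -/
abbrev V : Type := G ⊕ G

noncomputable def vpt : V → E
  | Sum.inl g => pt g 0 0
  | Sum.inr g => pt g 0 1

def vr : V → ℤ
  | Sum.inl g => er g
  | Sum.inr g => er g

def vN : V → ℤ
  | Sum.inl g => ((er g).natAbs : ℤ) + ((es g).natAbs : ℤ) + ((es g - er g).natAbs : ℤ)
  | Sum.inr g => ((er g).natAbs : ℤ) + ((es g).natAbs : ℤ) + ((es g + er g).natAbs : ℤ)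

/-- index of the edge towards the parent -/
def pidx : V → Fin 3
  | Sum.inl g => if (0 < er g ∧ 0 < es g) ∨ (er g < 0 ∧ es g < 0) then
      (if (es g).natAbs < (er g).natAbs then 2 else 1) else 0
  | Sum.inr g => if (0 < er g ∧ es g < 0) ∨ (er g < 0 ∧ 0 < es g) then
      (if (es g).natAbs < (er g).natAbs then 2 else 1) else 0

def par : V → V
  | Sum.inl g => Sum.inr (g * c (pidx (Sum.inl g)))
  | Sum.inr g => Sum.inl (g * (c (pidx (Sum.inr g)))⁻¹)

noncomputable def pedge : V → ℝ → E
  | Sum.inl g, b => pt g (pidx (Sum.inl g)) b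
  | Sum.inr g, b => pt (g * (c (pidx (Sum.inr g)))⁻¹) (pidx (Sum.inr g)) (1 - b)

lemma pedge_zero (v : V) {b : ℝ} (h : b ≤ 0) : pedge v b = vpt v := by
  rcases v with g | g
  · exact pt_le_zero _ _ h
  · simp only [pedge, vpt]
    rw [pt_ge_one _ _ (by linarith)]
    simp

lemma pedge_one (v : V) {b : ℝ} (h : 1 ≤ b) : pedge v b = vpt (par v) := by
  rcases v with g | g
  · exact pt_ge_one _ _ h
  · simp only [pedge, vpt, par]
    rw [pt_le_zero _ _ (by linarith)]

lemma continuous_pedge (v : V) : Continuous (pedge v) := by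
  rcases v with g | g
  · exact continuous_pt _ _
  · exact (continuous_pt _ _).comp (continuous_const.sub continuous_id)

lemma vN_ge (v : V) : 2 ≤ vN v := by
  rcases v with g | g
  · have h1 := es_mod g
    have h2 := er_mod g
    simp only [vN]
    omega
  · have h1 := es_mod g
    have h2 := er_mod g
    simp only [vN]
    omega

lemma vN_par (v : V) (h : vr v ≠ 0) : vN (par v) < vN v := by
  rcases v with g | g
  · have h1 := es_mod g
    have h2 := er_mod g
    simp only [vN, par, pidx, vr] at *
    split_ifs <;> simp only [er_mul, es_mul, c_zero, er_one, es_one, ep_one, eq_one, ep_c1, eq_c1,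
      er_c1, es_c1, ep_c2, eq_c2, er_c2, es_c2] <;> omega
  · have h1 := es_mod g
    have h2 := er_mod g
    simp only [vN, par, pidx, vr] at *
    split_ifs <;> simp only [er_mul, es_mul, c_zero, er_one, es_one, ep_one, eq_one, ep_c1, eq_c1,
      er_c1, es_c1, ep_c2, eq_c2, er_c2, es_c2, ep_inv, es_inv, er_inv, eq_inv] <;> omega

/-- Classification of edges. -/
lemma edge_class (g : G) (i : Fin 3) : (er g = 0 ∧ i ≠ 2) ∨
    (vr (Sum.inr (g * c i)) ≠ 0 ∧ pidx (Sum.inr (g * c i)) = i ∧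
      vN (Sum.inl g) < vN (Sum.inr (g * c i))) ∨
    (vr (Sum.inl g) ≠ 0 ∧ pidx (Sum.inl g) = i ∧ vN (Sum.inr (g * c i)) < vN (Sum.inl g)) := by
  have h1 := es_mod g
  have h2 := er_mod g
  fin_cases i <;>
  simp only [vN, par, pidx, vr, Fin.zero_eta, Fin.mk_one, Fin.reduceFinMk, er_mul, es_mul, c_zero,
      er_one, es_one, ep_one, eq_one, ep_c1, eq_c1,
      er_c1, es_c1, ep_c2, eq_c2, er_c2, es_c2] <;>
  split_ifs <;> simp only [reduceCtorEq, Fin.isValue, ne_eq, not_true_eq_false, and_false, or_false,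
    false_or, true_and, and_true, not_false_eq_true, Fin.reduceEq, zero_ne_one, one_ne_zero,
    false_and] <;> omega

noncomputable def ray : ℕ → V → ℝ → E
  | 0, v, _ => vpt v
  | n + 1, v, h => if vr v = 0 then vpt v else
      if h ≤ vN (par v) then ray n (par v) h else
        pedge v ((vN v - h) / (vN v - vN (par v)))

lemma ray_top (n : ℕ) (v : V) {h : ℝ} (hh : vN v ≤ h) : ray n v h = vpt v := by
  rcases n with _ | n
  · rfl
  · rw [ray]
    split_ifs with h1 h2
    · rfl
    · have := vN_par v h1
      have : (vN (par v) : ℝ) < vN v := by exact_mod_cast this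
      linarith
    · have := vN_par v h1
      have : (vN (par v) : ℝ) < vN v := by exact_mod_cast this
      apply pedge_zero
      apply div_nonpos_of_nonpos_of_nonneg <;> linarith

lemma continuous_ray (n : ℕ) : ∀ v, Continuous (ray n v) := by
  induction n with
  | zero => intro v; exact continuous_const
  | succ n ih =>
    intro v
    by_cases h1 : vr v = 0
    · have : ray (n + 1) v = fun _ => vpt v := by funext h; simp [ray, h1]
      rw [this]; exact continuous_const
    · have : ray (n + 1) v = fun h : ℝ => if h ≤ vN (par v) then ray n (par v) h else
        pedge v ((vN v - h) / (vN v - vN (par v))) := by funext h; simp [ray, h1]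
      rw [this]
      refine Continuous.if_le (ih _) ?_ continuous_id continuous_const ?_
      · exact (continuous_pedge v).comp (by fun_prop)
      · intro x hx
        have := vN_par v h1
        have : (vN (par v) : ℝ) < vN v := by exact_mod_cast this
        rw [ray_top n (par v) hx.symm.le, pedge_one]
        rw [hx, div_self (by linarith)]

lemma ray_fuel (n : ℕ) : ∀ (m : ℕ) (v : V), vN v ≤ n → vN v ≤ m → ray n v = ray m v := by
  induction n with
  | zero => intro m v h; have := vN_ge v; simp at h; omega
  | succ n ih =>
    intro m v h h'
    rcases m with _ | m
    · have := vN_ge v; simp at h'; omega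
    · funext x
      rw [ray, ray]
      split_ifs with h1 h2
      · rfl
      · have := vN_par v h1
        push_cast at h h'
        rw [ih m (par v) (by omega) (by omega)]
      · rfl

noncomputable def Ray (v : V) : ℝ → E := ray (vN v).toNat v

lemma continuous_Ray (v : V) : Continuous (Ray v) := continuous_ray _ v

lemma Ray_top (v : V) {h : ℝ} (hh : vN v ≤ h) : Ray v h = vpt v := ray_top _ v hh

lemma Ray_zero (v : V) (h : ℝ) (hv : vr v = 0) : Ray v h = vpt v := by
  have h2 := vN_ge v
  obtain ⟨n, hn⟩ : ∃ n, (vN v).toNat = n + 1 := ⟨(vN v).toNat - 1, by omega⟩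
  rw [Ray, hn, ray, if_pos hv]

lemma Ray_low (v : V) {h : ℝ} (hv : vr v ≠ 0) (hh : h ≤ vN (par v)) :
    Ray v h = Ray (par v) h := by
  have h2 := vN_ge v
  have h3 := vN_par v hv
  have h4 := vN_ge (par v)
  obtain ⟨n, hn⟩ : ∃ n, (vN v).toNat = n + 1 := ⟨(vN v).toNat - 1, by omega⟩
  rw [Ray, hn, ray, if_neg hv, if_pos hh, Ray]
  rw [ray_fuel n (vN (par v)).toNat _ (by omega) (by omega)]

lemma Ray_mid (v : V) {h : ℝ} (hv : vr v ≠ 0) (hh : vN (par v) ≤ h) :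
    Ray v h = pedge v ((vN v - h) / (vN v - vN (par v))) := by
  have h2 := vN_ge v
  have h3 := vN_par v hv
  have h5 : (vN (par v) : ℝ) < vN v := by exact_mod_cast h3
  rcases hh.eq_or_lt with hh | hh
  · rw [Ray_low v hv hh.symm.le, Ray_top _ hh.le, pedge_one]
    rw [hh, div_self]
    linarith
  · obtain ⟨n, hn⟩ : ∃ n, (vN v).toNat = n + 1 := ⟨(vN v).toNat - 1, by omega⟩
    rw [Ray, hn, ray, if_neg hv, if_neg (by linarith)]

/-- The line `L`. -/
def Lline : Set E := {e | ∃ g i, ∃ a ∈ Set.Icc (0 : ℝ) 1, er g = 0 ∧ i ≠ 2 ∧ e = pt g i a}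

lemma vpt_mem (v : V) (h : vr v = 0) : vpt v ∈ Lline := by
  rcases v with g | g
  · exact ⟨g, 0, 0, by simp, h, by decide, rfl⟩
  · exact ⟨g, 0, 1, by simp, h, by decide, rfl⟩

lemma Ray_two (n : ℕ) : ∀ v, vN v ≤ n → Ray v 2 ∈ Lline := by
  induction n with
  | zero => intro v h; have := vN_ge v; simp at h; omega
  | succ n ih =>
    intro v h
    by_cases hv : vr v = 0
    · rw [Ray_zero v 2 hv]; exact vpt_mem v hv
    · have h3 := vN_par v hv
      have h4 := vN_ge (par v)
      have h5 : (2 : ℝ) ≤ vN (par v) := by exact_mod_cast h4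
      rw [Ray_low v hv h5]
      apply ih
      push_cast at h
      omega

/-- left translation of vertices -/
def vmul (k : G) : V → V
  | Sum.inl g => Sum.inl (k * g)
  | Sum.inr g => Sum.inr (k * g)

lemma er_kmul {k : G} (hk : er k = 0) (g : G) : er (k * g) = er g := by
  rw [er_mul, hk, (diag_of_er hk).2]; ring
lemma es_kmul {k : G} (hk : er k = 0) (g : G) : es (k * g) = es g := by
  rw [es_mul, hk, (diag_of_er hk).2]; ring

lemma vr_vmul {k : G} (hk : er k = 0) (v : V) : vr (vmul k v) = vr v := by
  rcases v with g | g <;> simp [vr, vmul, er_kmul hk]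
lemma vN_vmul {k : G} (hk : er k = 0) (v : V) : vN (vmul k v) = vN v := by
  rcases v with g | g <;> simp [vN, vmul, er_kmul hk, es_kmul hk]
lemma pidx_vmul {k : G} (hk : er k = 0) (v : V) : pidx (vmul k v) = pidx v := by
  rcases v with g | g <;> simp [pidx, vmul, er_kmul hk, es_kmul hk]
lemma par_vmul {k : G} (hk : er k = 0) (v : V) : par (vmul k v) = vmul k (par v) := by
  have := pidx_vmul hk v
  rcases v with g | g <;> simp only [par, vmul] at * <;> rw [this, mul_assoc]
lemma vpt_vmul (k : G) (v : V) : vpt (vmul k v) = k • vpt v := by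
  rcases v with g | g <;> rfl
lemma pedge_vmul {k : G} (hk : er k = 0) (v : V) (b : ℝ) :
    pedge (vmul k v) b = k • pedge v b := by
  have := pidx_vmul hk v
  rcases v with g | g <;> simp only [pedge, vmul] at * <;> rw [this, smul_pt]
  rw [mul_assoc]

lemma ray_vmul {k : G} (hk : er k = 0) (n : ℕ) : ∀ (v : V) (h : ℝ),
    ray n (vmul k v) h = k • ray n v h := by
  induction n with
  | zero => intro v h; exact vpt_vmul k v
  | succ n ih =>
    intro v h
    rw [ray, ray, vr_vmul hk, par_vmul hk, vN_vmul hk, vN_vmul hk, ih, pedge_vmul hk, vpt_vmul]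
    split_ifs <;> rfl

lemma Ray_vmul {k : G} (hk : er k = 0) (v : V) (h : ℝ) : Ray (vmul k v) h = k • Ray v h := by
  rw [Ray, Ray, vN_vmul hk, ray_vmul hk]

noncomputable def kht (g : G) (i : Fin 3) (a : ℝ) : ℝ :=
  (1 - a) * vN (Sum.inl g) + a * vN (Sum.inr (g * c i))

open Classical in
noncomputable def Jfun (g : G) (i : Fin 3) (a h : ℝ) : E :=
  if er g = 0 ∧ i ≠ 2 then pt g i a else
    if vN (Sum.inl g) < vN (Sum.inr (g * c i)) then Ray (Sum.inr (g * c i)) (min h (kht g i a))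
    else Ray (Sum.inl g) (min h (kht g i a))

lemma continuous_Jfun (g : G) (i : Fin 3) : Continuous (fun p : ℝ × ℝ => Jfun g i p.1 p.2) := by
  unfold Jfun
  split_ifs
  · exact (continuous_pt _ _).comp continuous_fst
  · exact (continuous_Ray _).comp (by unfold kht; fun_prop)
  · exact (continuous_Ray _).comp (by unfold kht; fun_prop)

noncomputable def Jmap (g : G) (i : Fin 3) (a : ℝ) : C(ℝ, E) :=
  ⟨fun h => Jfun g i a h, (continuous_Jfun g i).comp (continuous_const.prodMk continuous_id)⟩

lemma continuous_Jmap (g : G) (i : Fin 3) : Continuous (Jmap g i) :=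
  ContinuousMap.continuous_of_continuous_uncurry _ (continuous_Jfun g i)

noncomputable def JV (v : V) : C(ℝ, E) :=
  ⟨Ray v, continuous_Ray v⟩

lemma Ray_min (v : V) (h : ℝ) : Ray v (min h (vN v)) = Ray v h := by
  rcases le_total h (vN v) with h1 | h1
  · rw [min_eq_left h1]
  · rw [min_eq_right h1, Ray_top _ le_rfl, Ray_top _ h1]

lemma par_inr (g : G) (i : Fin 3) (h : pidx (Sum.inr (g * c i)) = i) :
    par (Sum.inr (g * c i)) = Sum.inl g := by
  simp [par, h]

lemma par_inl (g : G) (i : Fin 3) (h : pidx (Sum.inl g) = i) :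
    par (Sum.inl g) = Sum.inr (g * c i) := by
  simp [par, h]

lemma er_mul_c {g : G} {i : Fin 3} (h : er g = 0) (hi : i ≠ 2) : er (g * c i) = 0 := by
  have : i = 0 ∨ i = 1 := by omega
  rcases this with rfl | rfl <;> simp [er_mul, h]

lemma Jmap_zero (g : G) (i : Fin 3) : Jmap g i 0 = JV (Sum.inl g) := by
  ext h
  change Jfun g i 0 h = Ray _ h
  have hk : kht g i 0 = vN (Sum.inl g) := by simp [kht]
  rw [Jfun, hk]
  rcases edge_class g i with h1 | h1 | h1
  · rw [if_pos h1, Ray_zero (Sum.inl g) _ h1.1]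
    exact pt_zero _ _ _
  · have h2 : ¬ (er g = 0 ∧ i ≠ 2) := fun h2 => h1.1 (er_mul_c h2.1 h2.2)
    rw [if_neg h2, if_pos h1.2.2]
    have h3 := par_inr g i h1.2.1
    rw [Ray_low _ h1.1 (by rw [h3]; exact min_le_right _ _), h3, Ray_min]
  · have h2 : ¬ (er g = 0 ∧ i ≠ 2) := fun h2 => h1.1 h2.1
    rw [if_neg h2, if_neg h1.2.2.not_gt, Ray_min]

lemma Jmap_one (g : G) (i : Fin 3) : Jmap g i 1 = JV (Sum.inr (g * c i)) := by
  ext h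
  change Jfun g i 1 h = Ray _ h
  have hk : kht g i 1 = vN (Sum.inr (g * c i)) := by simp [kht]
  rw [Jfun, hk]
  rcases edge_class g i with h1 | h1 | h1
  · rw [if_pos h1, Ray_zero (Sum.inr (g * c i)) _ (er_mul_c h1.1 h1.2)]
    exact pt_ge_one _ _ le_rfl
  · have h2 : ¬ (er g = 0 ∧ i ≠ 2) := fun h2 => h1.1 (er_mul_c h2.1 h2.2)
    rw [if_neg h2, if_pos h1.2.2, Ray_min]
  · have h2 : ¬ (er g = 0 ∧ i ≠ 2) := fun h2 => h1.1 h2.1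
    rw [if_neg h2, if_neg h1.2.2.not_gt]
    have h3 := par_inl g i h1.2.1
    rw [Ray_low _ h1.1 (by rw [h3]; exact min_le_right _ _), h3, Ray_min]

lemma exists_J : ∃ J : C(E, C(ℝ, E)), ∀ g i, ∀ a ∈ Set.Icc (0 : ℝ) 1, J (pt g i a) = Jmap g i a :=
  E_lift Jmap continuous_Jmap (fun g => JV (Sum.inl g)) (fun g => JV (Sum.inr g)) Jmap_zero Jmap_one

lemma Jfun_self (g : G) (i : Fin 3) {a : ℝ} (ha : a ∈ Set.Icc (0 : ℝ) 1) :
    Jfun g i a (kht g i a) = pt g i a := by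
  obtain ⟨ha0, ha1⟩ := ha
  rw [Jfun, min_self]
  rcases edge_class g i with h1 | h1 | h1
  · rw [if_pos h1]
  · have h2 : ¬ (er g = 0 ∧ i ≠ 2) := fun h2 => h1.1 (er_mul_c h2.1 h2.2)
    rw [if_neg h2, if_pos h1.2.2]
    have h3 := par_inr g i h1.2.1
    have h4 : (vN (Sum.inl g) : ℝ) < vN (Sum.inr (g * c i)) := by exact_mod_cast h1.2.2
    rw [Ray_mid _ h1.1 (by rw [h3]; unfold kht; nlinarith), h3]
    simp only [pedge]
    rw [h1.2.1, mul_inv_cancel_right]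
    congr 1
    have : (vN (Sum.inr (g * c i)) : ℝ) - vN (Sum.inl g) ≠ 0 := by linarith
    unfold kht
    field_simp
    ring
  · have h2 : ¬ (er g = 0 ∧ i ≠ 2) := fun h2 => h1.1 h2.1
    rw [if_neg h2, if_neg h1.2.2.not_gt]
    have h3 := par_inl g i h1.2.1
    have h4 : (vN (Sum.inr (g * c i)) : ℝ) < vN (Sum.inl g) := by exact_mod_cast h1.2.2
    rw [Ray_mid _ h1.1 (by rw [h3]; unfold kht; nlinarith), h3]
    simp only [pedge]
    rw [h1.2.1]
    congr 1
    have : (vN (Sum.inl g) : ℝ) - vN (Sum.inr (g * c i)) ≠ 0 := by linarith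
    unfold kht
    field_simp
    ring

lemma Jfun_two (g : G) (i : Fin 3) {a : ℝ} (ha : a ∈ Set.Icc (0 : ℝ) 1) :
    Jfun g i a 2 ∈ Lline := by
  have hk : min 2 (kht g i a) = 2 := by
    apply min_eq_left
    have h1 : (2 : ℝ) ≤ vN (Sum.inl g) := by exact_mod_cast vN_ge _
    have h2 : (2 : ℝ) ≤ vN (Sum.inr (g * c i)) := by exact_mod_cast vN_ge _
    obtain ⟨ha0, ha1⟩ := ha
    unfold kht
    nlinarith
  unfold Jfun
  rw [hk]
  split_ifs with h1 h2
  · exact ⟨g, i, a, ha, h1.1, h1.2, rfl⟩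
  · exact Ray_two (vN (Sum.inr (g * c i))).toNat _ (by omega)
  · exact Ray_two (vN (Sum.inl g)).toNat _ (by omega)

lemma kht_mul {k : G} (hk : er k = 0) (g : G) (i : Fin 3) (a : ℝ) :
    kht (k * g) i a = kht g i a := by
  unfold kht
  rw [show (Sum.inl (k * g) : V) = vmul k (Sum.inl g) from rfl,
    show (Sum.inr (k * g * c i) : V) = vmul k (Sum.inr (g * c i)) by simp [vmul, mul_assoc],
    vN_vmul hk, vN_vmul hk]

lemma Jfun_mul {k : G} (hk : er k = 0) (g : G) (i : Fin 3) (a h : ℝ) :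
    Jfun (k * g) i a h = k • Jfun g i a h := by
  unfold Jfun
  rw [kht_mul hk, er_kmul hk,
    show (Sum.inl (k * g) : V) = vmul k (Sum.inl g) from rfl,
    show (Sum.inr (k * g * c i) : V) = vmul k (Sum.inr (g * c i)) by simp [vmul, mul_assoc],
    vN_vmul hk, vN_vmul hk, Ray_vmul hk, Ray_vmul hk]
  split_ifs <;> rfl

/-- The equivariant contraction of the tree onto the line `L`. -/
theorem exists_contraction : ∃ H : C(ℝ × E, E), (∀ e, H (0, e) = e) ∧ (∀ e, H (1, e) ∈ Lline) ∧
    (∀ t, ∀ e ∈ Lline, H (t, e) = e) ∧ (∀ t e k, er k = 0 → H (t, k • e) = k • H (t, e)) := by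
  obtain ⟨J, hJ⟩ := exists_J
  let ht : C(E, ℝ) := lin (fun g => vN (Sum.inl g)) (fun g => vN (Sum.inr g))
  have hht : ∀ g i, ∀ a ∈ Set.Icc (0 : ℝ) 1, ht (pt g i a) = kht g i a := fun g i a ha =>
    lin_pt _ _ g i ha
  have hc : Continuous (fun p : ℝ × E => J p.2 ((1 - p.1) * ht p.2 + 2 * p.1)) := by
    have h1 : Continuous (fun p : C(ℝ, E) × ℝ => p.1 p.2) := ContinuousEval.continuous_eval
    exact h1.comp ((J.continuous.comp continuous_snd).prodMk
      (by fun_prop))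
  refine ⟨⟨_, hc⟩, ?_, ?_, ?_, ?_⟩
  · intro e
    obtain ⟨g, i, a, ha, rfl⟩ := E_rep e
    simp only [ContinuousMap.coe_mk]
    rw [hJ g i a ha, hht g i a ha]
    change Jfun _ _ _ _ = _
    simpa using Jfun_self g i ha
  · intro e
    obtain ⟨g, i, a, ha, rfl⟩ := E_rep e
    simp only [ContinuousMap.coe_mk]
    rw [hJ g i a ha, hht g i a ha]
    change Jfun _ _ _ _ ∈ _
    simpa using Jfun_two g i ha
  · rintro t _ ⟨g, i, a, ha, h1, h2, rfl⟩
    simp only [ContinuousMap.coe_mk]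
    rw [hJ g i a ha]
    change Jfun _ _ _ _ = _
    rw [Jfun, if_pos ⟨h1, h2⟩]
  · intro t e k hk
    obtain ⟨g, i, a, ha, rfl⟩ := E_rep e
    simp only [ContinuousMap.coe_mk]
    rw [smul_pt, hJ g i a ha, hJ _ i a ha, hht g i a ha, hht _ i a ha, kht_mul hk]
    exact Jfun_mul hk _ _ _ _
/-! ### Lines in the tree -/

def Ex : Set E := {e | ∃ g i, ∃ a ∈ Set.Icc (0 : ℝ) 1, i ≠ 2 ∧ e = pt g i a}

def Line (u : G) : Set E := {e | u⁻¹ • e ∈ Lline}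

lemma mem_Line_smul {u : G} {e : E} (g : G) (h : e ∈ Line u) : g • e ∈ Line (g * u) := by
  change (g * u)⁻¹ • g • e ∈ Lline
  have h1 : u⁻¹ • e ∈ Lline := h
  rw [smul_smul]
  simpa [mul_assoc] using h1

lemma mem_Line_one {e : E} : e ∈ Line 1 ↔ e ∈ Lline := by
  change (1 : G)⁻¹ • e ∈ Lline ↔ _
  simp

lemma Lline_smul {k : G} (hk : er k = 0) {e : E} (h : e ∈ Lline) : k • e ∈ Lline := by
  obtain ⟨g, i, a, ha, h1, h2, rfl⟩ := h
  exact ⟨k * g, i, a, ha, by rw [er_kmul hk, h1], h2, rfl⟩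

lemma Line_of_er {u : G} (hu : er u = 0) {e : E} (h : e ∈ Line u) : e ∈ Lline := by
  have := Lline_smul hu h
  simpa using this

lemma Ex_of_pY {e : E} (h : pY e ∈ pY '' Ex) : e ∈ Ex := by
  obtain ⟨e', ⟨g, i, a, ha, h2, rfl⟩, he⟩ := h
  obtain ⟨k, hk⟩ := pY_eq he.symm
  exact ⟨k * g, i, a, ha, h2, hk⟩

lemma er_mul_c' (g : G) {i : Fin 3} (hi : i ≠ 2) : er (g * c i) = er g := by
  have : i = 0 ∨ i = 1 := by omega
  rcases this with rfl | rfl <;> simp [er_mul]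

open Classical in
/-- indicator function of a line -/
noncomputable def chi (u : G) : C(E, ℝ) :=
  lin (fun h => if er (u⁻¹ * h) = 0 then 1 else 0) (fun h => if er (u⁻¹ * h) = 0 then 1 else 0)

open Classical in
lemma chi_pt (u g : G) {i : Fin 3} (hi : i ≠ 2) {a : ℝ} (ha : a ∈ Set.Icc (0 : ℝ) 1) :
    chi u (pt g i a) = if er (u⁻¹ * g) = 0 then 1 else 0 := by
  rw [chi, lin_pt _ _ _ _ ha, ← mul_assoc, er_mul_c' _ hi]
  ring

lemma mem_Line_iff (u g : G) {i : Fin 3} (hi : i ≠ 2) {a : ℝ} (ha : a ∈ Set.Icc (0 : ℝ) 1)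
    (h : er (u⁻¹ * g) = 0) : pt g i a ∈ Line u :=
  ⟨u⁻¹ * g, i, a, ha, h, hi, rfl⟩

lemma chi_Line {u : G} {e : E} (h : e ∈ Line u) : chi u e = 1 := by
  obtain ⟨g, i, a, ha, h1, h2, h3⟩ := h
  have : e = pt (u * g) i a := by rw [← smul_pt, ← h3, smul_inv_smul]
  rw [this, chi_pt _ _ h2 ha, inv_mul_cancel_left, if_pos h1]

lemma Line_inter {u v : G} {e : E} (h : e ∈ Line u) (h' : e ∈ Line v) : er (u⁻¹ * v) = 0 := by
  have h0 := chi_Line h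
  obtain ⟨g, i, a, ha, h1, h2, h3⟩ := h'
  have : e = pt (v * g) i a := by rw [← smul_pt, ← h3, smul_inv_smul]
  rw [this, chi_pt _ _ h2 ha] at h0
  have h4 : er (u⁻¹ * (v * g)) = 0 := by
    by_contra h5
    rw [if_neg h5] at h0
    norm_num at h0
  rw [← mul_assoc, er_mul, h1, (diag_of_er h1).1] at h4
  linarith

lemma exists_Line {s : Set ℝ} (hs : IsPreconnected s) {t0 : ℝ} (ht0 : t0 ∈ s) {F : ℝ → E}
    (hF : ContinuousOn F s) (h : ∀ t ∈ s, F t ∈ Ex) : ∃ u, ∀ t ∈ s, F t ∈ Line u := by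
  obtain ⟨g, i, a, ha, hi, h0⟩ := h t0 ht0
  refine ⟨g, ?_⟩
  intro t ht
  obtain ⟨g', j, b, hb, hj, h1⟩ := h t ht
  by_cases h2 : er (g⁻¹ * g') = 0
  · rw [h1]; exact mem_Line_iff _ _ hj hb h2
  · exfalso
    have hc : ContinuousOn (fun t => chi g (F t)) s := (chi g).continuous.comp_continuousOn hF
    have := hs.intermediate_value ht ht0 hc
    have h3 : (1 / 2 : ℝ) ∈ Set.Icc (chi g (F t)) (chi g (F t0)) := by
      rw [h0, h1, chi_pt _ _ hi ha, chi_pt _ _ hj hb, if_neg h2, if_pos (by simp)]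
      norm_num
    obtain ⟨t', ht', h4⟩ := this h3
    obtain ⟨g'', k, d, hd, hk, h5⟩ := h t' ht'
    simp only at h4
    rw [h5, chi_pt _ _ hk hd] at h4
    split_ifs at h4 <;> norm_num at h4

noncomputable def pos : C(E, ℝ) := lin (fun g => eq' g) (fun g => eq' g + 1)

/-! ### Target data -/

structure TD (Cj : Set X) where
  A : Fin 3 → ℝ → X
  hA : ∀ i, Continuous (A i)
  hA0 : ∀ i, A i 0 = A 0 0
  hA1 : ∀ i, A i 1 = A 0 1
  hAC : ∀ i, i ≠ 2 → ∀ a ∈ Set.Icc (0 : ℝ) 1, A i a ∈ Cj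
  phi : C(X, Y)
  phiC : ∀ z ∈ Cj, phi z ∈ pY '' Ex
  K : C(unitInterval × X, X)
  K0 : ∀ z, K (0, z) = z
  K1 : ∀ z, ∃ i, ∃ a ∈ Set.Icc (0 : ℝ) 1, phi z = pY (pt 1 i a) ∧ K (1, z) = A i a
  KC : ∀ t, ∀ z ∈ Cj, K (t, z) = z

namespace TD

variable {Cj : Set X} (T : TD Cj)

lemma exists_psi : ∃ m : C(E, X), ∀ g i, ∀ a ∈ Set.Icc (0 : ℝ) 1, m (pt g i a) = T.A i a :=
  E_lift (fun _ i a => T.A i a) (fun _ i => T.hA i) (fun _ => T.A 0 0) (fun _ => T.A 0 1)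
    (fun _ i => T.hA0 i) (fun _ i => T.hA1 i)

noncomputable def psi : C(E, X) := T.exists_psi.choose

lemma psi_pt (g : G) (i : Fin 3) {a : ℝ} (ha : a ∈ Set.Icc (0 : ℝ) 1) :
    T.psi (pt g i a) = T.A i a := T.exists_psi.choose_spec g i a ha

lemma psi_smul (g : G) (e : E) : T.psi (g • e) = T.psi e := by
  obtain ⟨h, i, a, ha, rfl⟩ := E_rep e
  rw [smul_pt, psi_pt _ _ _ ha, psi_pt _ _ _ ha]

lemma K1_eq {z : X} {e : E} (h : T.phi z = pY e) : T.K (1, z) = T.psi e := by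
  obtain ⟨i, a, ha, h1, h2⟩ := T.K1 z
  rw [h1] at h
  obtain ⟨g, hg⟩ := pY_eq h.symm
  rw [hg, psi_smul, psi_pt _ _ _ ha, h2]

lemma psi_Lline {e : E} (h : e ∈ Lline) : T.psi e ∈ Cj := by
  obtain ⟨g, i, a, ha, -, hi, rfl⟩ := h
  rw [psi_pt _ _ _ ha]
  exact T.hAC i hi a ha

/-- A loop parametrising `Cj`. -/
noncomputable def hloop (b : ℝ) : X := if b ≤ 1 / 2 then T.A 0 (2 * b) else T.A 1 (2 - 2 * b)

lemma continuous_hloop : Continuous T.hloop := by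
  refine Continuous.if_le ((T.hA 0).comp (by fun_prop)) ((T.hA 1).comp (by fun_prop))
    continuous_id continuous_const ?_
  rintro x rfl
  norm_num [T.hA1 1]

noncomputable def cper (t : ℝ) : X := T.hloop (Int.fract (t / 2))

lemma continuous_cper : Continuous T.cper := by
  have h1 : Continuous (fun t : ℝ => T.hloop (Int.fract t)) := by
    refine ContinuousOn.comp_fract'' T.continuous_hloop.continuousOn ?_
    have := T.hA0 1
    norm_num [hloop, this]
  exact h1.comp (by fun_prop : Continuous fun t : ℝ => t / 2)

lemma cper_mem (t : ℝ) : T.cper t ∈ Cj := by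
  have h1 := Int.fract_nonneg (t / 2)
  have h2 := Int.fract_lt_one (t / 2)
  unfold cper hloop
  split_ifs with h
  · exact T.hAC 0 (by decide) _ ⟨by linarith, by linarith⟩
  · exact T.hAC 1 (by decide) _ ⟨by linarith, by linarith⟩

lemma cper_pos {e : E} (h : e ∈ Lline) : T.cper (pos e) = T.psi e := by
  obtain ⟨g, i, a, ha, h1, hi, rfl⟩ := h
  rw [psi_pt _ _ _ ha]
  obtain ⟨ha0, ha1⟩ := id ha
  rw [pos, lin_pt _ _ _ _ ha]
  obtain ⟨m, hm⟩ : ∃ m, eq' g = 2 * m := ⟨eq' g / 2, by have := eq_mod g; omega⟩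
  have hp := (diag_of_er h1).1
  have : i = 0 ∨ i = 1 := by omega
  rcases this with rfl | rfl
  · have e1 : ((1 - a) * (eq' g : ℝ) + a * (eq' (g * c 0) + 1)) / 2 = a / 2 + m := by
      simp [hm]; ring
    rw [cper, e1, Int.fract_add_intCast, Int.fract_eq_self.mpr ⟨by linarith, by linarith⟩, hloop,
      if_pos (by linarith)]
    congr 1; ring
  · have e1 : ((1 - a) * (eq' g : ℝ) + a * (eq' (g * c 1) + 1)) / 2 = -a / 2 + m := by
      simp [eq_mul, hp, hm]; ring
    rw [cper, e1, Int.fract_add_intCast]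
    rcases ha0.eq_or_lt with rfl | hpos
    · simp [hloop, T.hA0 1]
    · have : Int.fract (-a / 2) = 1 - a / 2 := by
        rw [Int.fract_eq_iff]
        exact ⟨by linarith, by linarith, -1, by push_cast; ring⟩
      rw [this, hloop]
      split_ifs with h5
      · have : a = 1 := by linarith
        subst this
        norm_num [T.hA1 1]
      · congr 1; ring

lemma inessential {S : Type*} [TopologicalSpace S] (r : C(S, Cj)) (κ : C(S, E)) (u : G)
    (hκ : ∀ s, κ s ∈ Line u) (hr : ∀ s, (r s : X) = T.psi (κ s)) : Inessential r := by
  have hpos : Continuous (fun s => pos (u⁻¹ • κ s)) :=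
    pos.continuous.comp ((continuous_const_smul _).comp κ.continuous)
  refine ⟨⟨T.cper 0, T.cper_mem 0⟩, ⟨⟨⟨fun p => ⟨T.cper ((1 - p.1) * pos (u⁻¹ • κ p.2)),
    T.cper_mem _⟩, ?_⟩, ?_, ?_⟩⟩⟩
  · refine Continuous.subtype_mk (T.continuous_cper.comp ?_) _
    exact (continuous_const.sub (continuous_subtype_val.comp continuous_fst)).mul
      (hpos.comp continuous_snd)
  · intro s
    apply Subtype.ext
    simp only [Set.Icc.coe_zero, sub_zero, one_mul]
    rw [hr s, T.cper_pos (hκ s), psi_smul]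
  · intro s
    apply Subtype.ext
    simp

end TD
/-! ### Parametrisation of the punctured Möbius band -/

lemma rel_symm {p q : Sq} (h : rel p q) : rel q p := by
  rcases h with h | ⟨h1, h2, h3⟩ | ⟨h1, h2, h3⟩
  · exact Or.inl h.symm
  · exact Or.inr (Or.inr ⟨h2, h1, h3⟩)
  · exact Or.inr (Or.inl ⟨h2, h1, h3⟩)

lemma rel_trans {p q r : Sq} (h : rel p q) (h' : rel q r) : rel p r := by
  rcases h with h | ⟨h1, h2, h3⟩ | ⟨h1, h2, h3⟩
  · have : p = q := Subtype.ext h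
    rw [this]; exact h'
  · rcases h' with h' | ⟨h1', h2', h3'⟩ | ⟨h1', h2', h3'⟩
    · have : q = r := Subtype.ext h'
      rw [← this]; exact Or.inr (Or.inl ⟨h1, h2, h3⟩)
    · rw [h2] at h1'; norm_num at h1'
    · left; exact Prod.ext (by rw [h1, h2']) (by rw [h3, h3'])
  · rcases h' with h' | ⟨h1', h2', h3'⟩ | ⟨h1', h2', h3'⟩
    · have : q = r := Subtype.ext h'
      rw [← this]; exact Or.inr (Or.inr ⟨h1, h2, h3⟩)
    · left; exact Prod.ext (by rw [h1, h2']) (by rw [h3'] at h3; linarith)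
    · rw [h2] at h1'; norm_num at h1'

lemma qm_eq {p q : Sq} : qm p = qm q ↔ rel p q := by
  have heq : Equivalence rel := ⟨fun _ => Or.inl rfl, rel_symm, rel_trans⟩
  constructor
  · intro h
    have := Quot.eqvGen_exact h
    rwa [heq.eqvGen_iff] at this
  · exact fun h => Quot.sound h

noncomputable def emb0 (p : Sq) : ℝ × ℝ × ℝ × ℝ :=
  (p.1.1 * (1 - p.1.1), p.1.1 * (1 - p.1.1) * (1 - 2 * p.1.1), p.1.2 * (1 - 2 * p.1.1),
    p.1.2 * (p.1.1 * (1 - p.1.1)))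

lemma emb0_rel (p q : Sq) (h : rel p q) : emb0 p = emb0 q := by
  rcases h with h | ⟨h1, h2, h3⟩ | ⟨h1, h2, h3⟩
  · have : p = q := Subtype.ext h
    rw [this]
  · simp only [emb0, h1, h2, h3]; norm_num
  · simp only [emb0, h1, h2, h3]; norm_num

noncomputable def emb : M → ℝ × ℝ × ℝ × ℝ := Quot.lift emb0 emb0_rel

lemma continuous_emb : Continuous emb := by
  apply continuous_quot_lift
  unfold emb0
  fun_prop

lemma emb_injective : Function.Injective emb := by
  intro m n h
  obtain ⟨p, rfl⟩ := Quot.exists_rep m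
  obtain ⟨q, rfl⟩ := Quot.exists_rep n
  apply Quot.sound
  change emb0 p = emb0 q at h
  simp only [emb0, Prod.mk.injEq] at h
  obtain ⟨h1, h2, h3, h4⟩ := h
  rw [← h1] at h2 h4
  rcases eq_or_ne (p.1.1 * (1 - p.1.1)) 0 with h0 | h0
  · have hq : q.1.1 * (1 - q.1.1) = 0 := by rw [← h1, h0]
    rcases mul_eq_zero.mp h0 with a | a <;> rcases mul_eq_zero.mp hq with b | b
    · left; exact Prod.ext (by rw [a, b]) (by rw [a, b] at h3; linarith)
    · right; left; refine ⟨a, by linarith, ?_⟩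
      have hb : q.1.1 = 1 := by linarith
      rw [a, hb] at h3; linarith
    · right; right; refine ⟨by linarith, b, ?_⟩
      have ha : p.1.1 = 1 := by linarith
      rw [b, ha] at h3; linarith
    · have ha : p.1.1 = 1 := by linarith
      have hb : q.1.1 = 1 := by linarith
      left; exact Prod.ext (by rw [ha, hb]) (by rw [ha, hb] at h3; linarith)
  · left
    have e1 := mul_left_cancel₀ h0 h2
    have e2 := mul_right_cancel₀ h0 h4
    exact Prod.ext (by linarith) e2

instance : T2Space M := T2Space.of_injective_continuous emb_injective continuous_emb

noncomputable def s1 (θ : ℝ) : ℝ := max (-1) (min 1 (|θ - 4| - 2))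
noncomputable def s2 (θ : ℝ) : ℝ := max (max (-1) (min 1 (2 - |θ - 2|))) (θ - 8)

lemma s_cases {θ : ℝ} (h0 : 0 ≤ θ) (h8 : θ ≤ 8) :
    (0 ≤ θ ∧ θ ≤ 1 ∧ s1 θ = 1 ∧ s2 θ = θ) ∨
    (1 ≤ θ ∧ θ ≤ 3 ∧ s1 θ = 2 - θ ∧ s2 θ = 1) ∨
    (3 ≤ θ ∧ θ ≤ 5 ∧ s1 θ = -1 ∧ s2 θ = 4 - θ) ∨
    (5 ≤ θ ∧ θ ≤ 7 ∧ s1 θ = θ - 6 ∧ s2 θ = -1) ∨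
    (7 ≤ θ ∧ θ ≤ 8 ∧ s1 θ = 1 ∧ s2 θ = θ - 8) := by
  unfold s1 s2
  rcases le_total θ 1 with h1 | h1
  · left
    refine ⟨h0, h1, ?_, ?_⟩
    · rw [abs_of_nonpos (by linarith), min_eq_left (by linarith), max_eq_right (by linarith)]
    · have e : max (-1 : ℝ) (min 1 (2 - |θ - 2|)) = θ := by
        rw [abs_of_nonpos (by linarith), min_eq_right (by linarith), max_eq_right (by linarith)]
        ring
      rw [e, max_eq_left (by linarith)]
  right
  rcases le_total θ 3 with h3 | h3
  · left
    refine ⟨h1, h3, ?_, ?_⟩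
    · rw [abs_of_nonpos (by linarith), min_eq_right (by linarith), max_eq_right (by linarith)]; ring
    · have : |θ - 2| ≤ 1 := abs_le.mpr ⟨by linarith, by linarith⟩
      have e : max (-1 : ℝ) (min 1 (2 - |θ - 2|)) = 1 := by
        rw [min_eq_left (by linarith), max_eq_right (by linarith)]
      rw [e, max_eq_left (by linarith)]
  right
  rcases le_total θ 5 with h5 | h5
  · left
    refine ⟨h3, h5, ?_, ?_⟩
    · have : |θ - 4| ≤ 1 := abs_le.mpr ⟨by linarith, by linarith⟩
      rw [min_eq_right (by linarith), max_eq_left (by linarith)]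
    · have e : max (-1 : ℝ) (min 1 (2 - |θ - 2|)) = 4 - θ := by
        rw [abs_of_nonneg (by linarith), min_eq_right (by linarith), max_eq_right (by linarith)]
        ring
      rw [e, max_eq_left (by linarith)]
  right
  rcases le_total θ 7 with h7 | h7
  · left
    refine ⟨h5, h7, ?_, ?_⟩
    · rw [abs_of_nonneg (by linarith), min_eq_right (by linarith), max_eq_right (by linarith)]; ring
    · have e : max (-1 : ℝ) (min 1 (2 - |θ - 2|)) = -1 := by
        rw [abs_of_nonneg (by linarith), min_eq_right (by linarith), max_eq_left (by linarith)]
      rw [e, max_eq_left (by linarith)]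
  right
  refine ⟨h7, h8, ?_, ?_⟩
  · rw [abs_of_nonneg (by linarith), min_eq_left (by linarith), max_eq_right (by linarith)]
  · have e : max (-1 : ℝ) (min 1 (2 - |θ - 2|)) = -1 := by
      rw [abs_of_nonneg (by linarith), min_eq_right (by linarith), max_eq_left (by linarith)]
    rw [e, max_eq_right (by linarith)]

lemma s_bd {θ : ℝ} (h0 : 0 ≤ θ) (h8 : θ ≤ 8) : |s1 θ| ≤ 1 ∧ |s2 θ| ≤ 1 ∧ (|s1 θ| = 1 ∨ |s2 θ| = 1) := by
  rcases s_cases h0 h8 with ⟨a, b, h1, h2⟩ | ⟨a, b, h1, h2⟩ | ⟨a, b, h1, h2⟩ | ⟨a, b, h1, h2⟩ |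
    ⟨a, b, h1, h2⟩ <;> rw [h1, h2] <;> refine ⟨?_, ?_, ?_⟩ <;>
    first
    | (rw [abs_le]; constructor <;> linarith)
    | (left; norm_num; done)
    | (right; norm_num; done)

noncomputable def cl (b x : ℝ) : ℝ := max 0 (min b x)

lemma continuous_cl (b : ℝ) : Continuous (cl b) := by unfold cl; fun_prop

lemma cl_mem {b : ℝ} (hb : 0 ≤ b) (x : ℝ) : 0 ≤ cl b x ∧ cl b x ≤ b :=
  ⟨le_max_left _ _, max_le hb (min_le_left _ _)⟩

lemma cl_eq {b x : ℝ} (h0 : 0 ≤ x) (h1 : x ≤ b) : cl b x = x := by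
  rw [cl, min_eq_right h1, max_eq_right h0]

noncomputable def cx (θ s : ℝ) : ℝ := 1 / 2 + s1 θ * (1 + s) / 4
noncomputable def cy (θ s : ℝ) : ℝ := s2 θ * (1 + 3 * s) / 4

lemma cxy_mem {θ s : ℝ} (h0 : 0 ≤ θ) (h8 : θ ≤ 8) (hs0 : 0 ≤ s) (hs1 : s ≤ 1) :
    (cx θ s, cy θ s) ∈ Sq := by
  obtain ⟨h1, h2, -⟩ := s_bd h0 h8
  rw [abs_le] at h1 h2
  obtain ⟨h1, h1'⟩ := h1
  obtain ⟨h2, h2'⟩ := h2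
  unfold cx cy
  refine ⟨⟨?_, ?_⟩, ⟨?_, ?_⟩⟩ <;> simp only <;> nlinarith

noncomputable def sqp (p : ℝ × ℝ) : Sq :=
  ⟨(cx (cl 8 p.1) (cl 1 p.2), cy (cl 8 p.1) (cl 1 p.2)),
    cxy_mem (cl_mem (by norm_num) _).1 (cl_mem (by norm_num) _).2 (cl_mem (by norm_num) _).1
      (cl_mem (by norm_num) _).2⟩

lemma sqp_val {θ s : ℝ} (h0 : 0 ≤ θ) (h8 : θ ≤ 8) (hs0 : 0 ≤ s) (hs1 : s ≤ 1) :
    (sqp (θ, s) : ℝ × ℝ) = (cx θ s, cy θ s) := by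
  simp [sqp, cl_eq h0 h8, cl_eq hs0 hs1]

lemma continuous_sqp : Continuous sqp := by
  apply Continuous.subtype_mk
  have h1 := continuous_cl 8
  have h2 := continuous_cl 1
  unfold cx cy s1 s2
  fun_prop

lemma mem_Bdisc {p : ℝ × ℝ} : p ∈ Bdisc ↔ |p.1 - 1 / 2| < 1 / 4 ∧ |p.2| < 1 / 4 := by
  simp only [Bdisc, Metric.mem_ball, Prod.dist_eq, Real.dist_eq, max_lt_iff, sub_zero]

lemma mem_Scirc {p : ℝ × ℝ} : p ∈ Scirc ↔ max |p.1 - 1 / 2| |p.2| = 1 / 4 := by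
  simp only [Scirc, Metric.mem_sphere, Prod.dist_eq, Real.dist_eq, sub_zero]

lemma cx_abs {θ s : ℝ} (hs0 : 0 ≤ s) : |cx θ s - 1 / 2| = |s1 θ| * (1 + s) / 4 := by
  unfold cx
  rw [add_sub_cancel_left, abs_div, abs_mul, abs_of_nonneg (by linarith : 0 ≤ 1 + s)]
  norm_num

lemma cy_abs {θ s : ℝ} (hs0 : 0 ≤ s) : |cy θ s| = |s2 θ| * (1 + 3 * s) / 4 := by
  unfold cy
  rw [abs_div, abs_mul, abs_of_nonneg (by linarith : 0 ≤ 1 + 3 * s)]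
  norm_num

/-- points of the square off the seam are determined by their image -/
lemma rel_off {p q : Sq} (h : rel p q) (hp : |p.1.1 - 1 / 2| < 1 / 2) : p = q := by
  rcases h with h | ⟨h1, h2, h3⟩ | ⟨h1, h2, h3⟩
  · exact Subtype.ext h
  · rw [h1] at hp; norm_num [abs_of_pos] at hp
  · rw [h1] at hp; norm_num [abs_of_pos] at hp

lemma qm_mem_Xset (p : Sq) (h : (p : ℝ × ℝ) ∉ Bdisc) : qm p ∈ Xset := by
  rintro ⟨q, hq, h1⟩
  have hq' := hq
  rw [Set.mem_ofPred_eq, mem_Bdisc] at hq'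
  have := rel_off (qm_eq.mp h1) (by linarith [hq'.1])
  rw [← this] at h
  exact h hq

lemma sqp_notMem (p : ℝ × ℝ) : (sqp p : ℝ × ℝ) ∉ Bdisc := by
  rw [mem_Bdisc]
  rintro ⟨h1, h2⟩
  have hs := (cl_mem (b := 1) (by norm_num) p.2).1
  change |cx _ _ - 1 / 2| < _ at h1
  change |cy _ _| < _ at h2
  rw [cx_abs hs] at h1
  rw [cy_abs hs] at h2
  rcases (s_bd (cl_mem (b := 8) (by norm_num) p.1).1 (cl_mem (b := 8) (by norm_num) p.1).2).2.2
    with h | h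
  · rw [h] at h1; linarith
  · rw [h] at h2; linarith

/-- The parametrisation. -/
noncomputable def pi (p : ℝ × ℝ) : X := ⟨qm (sqp p), qm_mem_Xset _ (sqp_notMem p)⟩

lemma continuous_pi' : Continuous pi := by
  apply Continuous.subtype_mk
  exact (continuous_quot_mk : Continuous (Quot.mk rel)).comp continuous_sqp

/-- parameter rectangle -/
def Rect : Set (ℝ × ℝ) := Set.Icc 0 8 ×ˢ Set.Icc 0 1

lemma exists_theta {a b : ℝ} (ha : |a| ≤ 1) (hb : |b| ≤ 1) (h : |a| = 1 ∨ |b| = 1) :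
    ∃ θ, 0 ≤ θ ∧ θ ≤ 8 ∧ s1 θ = a ∧ s2 θ = b := by
  rw [abs_le] at ha hb
  have key : ∀ θ : ℝ, 0 ≤ θ → θ ≤ 8 → _ := fun θ h0 h8 => @s_cases θ h0 h8
  have h' : a = 1 ∨ a = -1 ∨ b = 1 ∨ b = -1 := by
    rcases h with h | h <;> rcases eq_or_eq_neg_of_abs_eq h with h | h <;> simp [h]
  rcases h' with rfl | rfl | rfl | rfl
  · rcases le_total 0 b with h0 | h0
    · refine ⟨b, h0, by linarith, ?_⟩
      have := key b h0 (by linarith)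
      grind
    · refine ⟨8 + b, by linarith, by linarith, ?_⟩
      have := key (8 + b) (by linarith) (by linarith)
      grind
  · refine ⟨4 - b, by linarith, by linarith, ?_⟩
    have := key (4 - b) (by linarith) (by linarith)
    grind
  · refine ⟨2 - a, by linarith, by linarith, ?_⟩
    have := key (2 - a) (by linarith) (by linarith)
    grind
  · refine ⟨6 + a, by linarith, by linarith, ?_⟩
    have := key (6 + a) (by linarith) (by linarith)
    grind

lemma pi_surj (x : X) : ∃ θ s, 0 ≤ θ ∧ θ ≤ 8 ∧ 0 ≤ s ∧ s ≤ 1 ∧ x = pi (θ, s) := by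
  obtain ⟨m, hm⟩ := x
  obtain ⟨⟨⟨x, y⟩, ⟨hx, hy⟩⟩, rfl⟩ := Quot.exists_rep m
  have hB : (x, y) ∉ Bdisc := by
    intro h
    exact hm ⟨⟨(x, y), ⟨hx, hy⟩⟩, h, rfl⟩
  rw [mem_Bdisc] at hB
  obtain ⟨hx0, hx1⟩ := hx
  obtain ⟨hy0, hy1⟩ := hy
  change ¬ (|x - 1 / 2| < 1 / 4 ∧ |y| < 1 / 4) at hB
  change 0 ≤ x at hx0
  change x ≤ 1 at hx1
  change -1 ≤ y at hy0
  change y ≤ 1 at hy1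
  have hx2 : |x - 1 / 2| ≤ 1 / 2 := abs_le.mpr ⟨by linarith, by linarith⟩
  have hy2 : |y| ≤ 1 := abs_le.mpr ⟨by linarith, by linarith⟩
  obtain ⟨s, hs⟩ : ∃ s, s = max (4 * |x - 1 / 2| - 1) ((4 * |y| - 1) / 3) := ⟨_, rfl⟩
  have hs1 : s ≤ 1 := by rw [hs]; exact max_le (by linarith) (by linarith)
  have hs0 : 0 ≤ s := by
    rw [hs, le_max_iff]
    by_contra hh
    push Not at hh
    exact hB ⟨by linarith [hh.1], by linarith [hh.2]⟩
  have hsa : 4 * |x - 1 / 2| - 1 ≤ s := by rw [hs]; exact le_max_left _ _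
  have hsb : (4 * |y| - 1) / 3 ≤ s := by rw [hs]; exact le_max_right _ _
  have p1 : 0 < 1 + s := by linarith
  have p2 : 0 < 1 + 3 * s := by linarith
  have ea : |(4 * (x - 1 / 2)) / (1 + s)| = 4 * |x - 1 / 2| / (1 + s) := by
    rw [abs_div, abs_mul, abs_of_pos p1]; norm_num
  have eb : |(4 * y) / (1 + 3 * s)| = 4 * |y| / (1 + 3 * s) := by
    rw [abs_div, abs_mul, abs_of_pos p2]; norm_num
  obtain ⟨θ, h0, h8, h1, h2⟩ := exists_theta (a := (4 * (x - 1 / 2)) / (1 + s))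
    (b := (4 * y) / (1 + 3 * s)) (by rw [ea, div_le_one p1]; linarith)
    (by rw [eb, div_le_one p2]; linarith) (by
      rw [ea, eb, div_eq_one_iff_eq p1.ne', div_eq_one_iff_eq p2.ne']
      rcases max_choice (4 * |x - 1 / 2| - 1) ((4 * |y| - 1) / 3) with h | h
      · left; rw [hs, h]; ring
      · right; rw [hs, h]; ring)
  refine ⟨θ, s, h0, h8, hs0, hs1, ?_⟩
  apply Subtype.ext
  change qm _ = qm _
  congr 1
  apply Subtype.ext
  rw [sqp_val h0 h8 hs0 hs1]
  simp only [cx, cy, h1, h2]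
  rw [div_mul_cancel₀ _ p1.ne', div_mul_cancel₀ _ p2.ne']
  ext <;> simp only <;> ring

lemma pi_fiber {θ s θ' s' : ℝ} (h0 : 0 ≤ θ) (h8 : θ ≤ 8) (hs0 : 0 ≤ s) (hs1 : s ≤ 1)
    (h0' : 0 ≤ θ') (h8' : θ' ≤ 8) (hs0' : 0 ≤ s') (hs1' : s' ≤ 1)
    (h : pi (θ, s) = pi (θ', s')) : s = s' ∧ (θ = θ' ∨ (θ = 0 ∧ θ' = 8) ∨ (θ = 8 ∧ θ' = 0) ∨
      (s = 1 ∧ θ' = θ + 4 ∧ (θ ≤ 1 ∨ (3 ≤ θ ∧ θ ≤ 4))) ∨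
      (s = 1 ∧ θ = θ' + 4 ∧ (θ' ≤ 1 ∨ (3 ≤ θ' ∧ θ' ≤ 4)))) := by
  have h1 : rel (sqp (θ, s)) (sqp (θ', s')) := qm_eq.mp (congrArg Subtype.val h)
  unfold rel at h1
  rw [sqp_val h0 h8 hs0 hs1, sqp_val h0' h8' hs0' hs1'] at h1
  obtain ⟨b1, b2, b3⟩ := s_bd h0 h8
  obtain ⟨b1', b2', b3'⟩ := s_bd h0' h8'
  have c1 := s_cases h0 h8
  have c2 := s_cases h0' h8'
  rcases h1 with h1 | ⟨h1, h2, h3⟩ | ⟨h1, h2, h3⟩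
  · rw [Prod.mk.injEq] at h1
    obtain ⟨e1, e2⟩ := h1
    have a1 : |s1 θ| * (1 + s) / 4 = |s1 θ'| * (1 + s') / 4 := by
      rw [← cx_abs hs0, ← cx_abs hs0', e1]
    have a2 : |s2 θ| * (1 + 3 * s) / 4 = |s2 θ'| * (1 + 3 * s') / 4 := by
      rw [← cy_abs hs0, ← cy_abs hs0', e2]
    have l1 : s ≤ s' := by
      rcases b3 with b3 | b3
      · rw [b3] at a1; nlinarith
      · rw [b3] at a2; nlinarith
    have l2 : s' ≤ s := by
      rcases b3' with b3' | b3'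
      · rw [b3'] at a1; nlinarith
      · rw [b3'] at a2; nlinarith
    have l3 : s = s' := le_antisymm l1 l2
    subst l3
    refine ⟨rfl, ?_⟩
    have f1 : s1 θ = s1 θ' := by
      unfold cx at e1
      have : s1 θ * (1 + s) = s1 θ' * (1 + s) := by linarith
      exact mul_right_cancel₀ (by linarith : (1 + s) ≠ 0) this
    have f2 : s2 θ = s2 θ' := by
      unfold cy at e2
      have : s2 θ * (1 + 3 * s) = s2 θ' * (1 + 3 * s) := by linarith
      exact mul_right_cancel₀ (by linarith : (1 + 3 * s) ≠ 0) this
    rw [f1, f2] at c1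
    clear a1 a2 b1 b2 b3 b1' b2' b3' e1 e2 f1 f2
    have : θ = θ' ∨ (θ = 0 ∧ θ' = 8) ∨ (θ = 8 ∧ θ' = 0) := by
      clear h
      grind (splits := 30)
    tauto
  · simp only [cx, cy] at h1 h2 h3
    rw [abs_le] at b1 b1'
    have u1 : s1 θ = -1 := by nlinarith
    have u2 : s = 1 := by rw [u1] at h1; linarith
    have u3 : s1 θ' = 1 := by nlinarith
    have u4 : s' = 1 := by rw [u3] at h2; linarith
    subst u2 u4
    have u5 : s2 θ = - s2 θ' := by linarith
    refine ⟨rfl, ?_⟩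
    rw [u1] at c1
    rw [u3] at c2
    clear b1 b2 b3 b1' b2' b3' h1 h2 h3 h
    grind (splits := 30)
  · simp only [cx, cy] at h1 h2 h3
    rw [abs_le] at b1 b1'
    have u1 : s1 θ' = -1 := by nlinarith
    have u2 : s' = 1 := by rw [u1] at h2; linarith
    have u3 : s1 θ = 1 := by nlinarith
    have u4 : s = 1 := by rw [u3] at h1; linarith
    subst u2 u4
    have u5 : s2 θ' = - s2 θ := by linarith
    refine ⟨rfl, ?_⟩
    rw [u3] at c1
    rw [u1] at c2
    clear b1 b2 b3 b1' b2' b3' h1 h2 h3 h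
    grind (splits := 30)

lemma pi_zero_eight {s : ℝ} (hs0 : 0 ≤ s) (hs1 : s ≤ 1) : pi (0, s) = pi (8, s) := by
  apply Subtype.ext
  change qm _ = qm _
  congr 1
  apply Subtype.ext
  rw [sqp_val (by norm_num) (by norm_num) hs0 hs1, sqp_val (by norm_num) (by norm_num) hs0 hs1]
  norm_num [cx, cy, s1, s2, abs_of_pos]

lemma pi_seam {θ : ℝ} (h0 : 0 ≤ θ) (h4 : θ ≤ 4) (h : θ ≤ 1 ∨ 3 ≤ θ) :
    pi (θ, 1) = pi (θ + 4, 1) := by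
  apply Subtype.ext
  apply qm_eq.mpr
  unfold rel
  rw [sqp_val h0 (by linarith) (by norm_num) (by norm_num), sqp_val (by linarith) (by linarith)
    (by norm_num) (by norm_num)]
  have c1 := s_cases h0 (by linarith)
  have c2 := @s_cases (θ + 4) (by linarith) (by linarith)
  simp only [cx, cy]
  rcases h with h | h
  · right; right
    have u1 : s1 θ = 1 ∧ s2 θ = θ := by clear c2; grind
    have u2 : s1 (θ + 4) = -1 ∧ s2 (θ + 4) = -θ := by clear c1; grind
    rw [u1.1, u1.2, u2.1, u2.2]
    refine ⟨by norm_num, by norm_num, by ring⟩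
  · right; left
    have u1 : s1 θ = -1 ∧ s2 θ = 4 - θ := by clear c2; grind
    have u2 : s1 (θ + 4) = 1 ∧ s2 (θ + 4) = θ - 4 := by clear c1; grind
    rw [u1.1, u1.2, u2.1, u2.2]
    refine ⟨by norm_num, by norm_num, by ring⟩

lemma pi_mem_C2 {θ : ℝ} (h0 : 0 ≤ θ) (h8 : θ ≤ 8) : pi (θ, 0) ∈ C2 := by
  refine ⟨sqp (θ, 0), rfl, ?_⟩
  rw [sqp_val h0 h8 le_rfl (by norm_num), mem_Scirc]
  simp only
  rw [cx_abs le_rfl, cy_abs le_rfl]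
  obtain ⟨b1, b2, b3⟩ := s_bd h0 h8
  rcases b3 with b3 | b3
  · rw [max_eq_left (by linarith), b3]; norm_num
  · rw [max_eq_right (by linarith), b3]; norm_num

lemma pi_mem_C1 {θ : ℝ} (h : θ ∈ Set.Icc (1 : ℝ) 3 ∪ Set.Icc 5 7) : pi (θ, 1) ∈ C1 := by
  refine ⟨sqp (θ, 1), rfl, ?_⟩
  rcases h with ⟨h1, h2⟩ | ⟨h1, h2⟩
  · rw [sqp_val (by linarith) (by linarith) (by norm_num) le_rfl]
    have c1 := @s_cases θ (by linarith) (by linarith)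
    have : s2 θ = 1 := by grind
    left
    simp only [cy, this]; norm_num
  · rw [sqp_val (by linarith) (by linarith) (by norm_num) le_rfl]
    have c1 := @s_cases θ (by linarith) (by linarith)
    have : s2 θ = -1 := by grind
    right
    simp only [cy, this]; norm_num

lemma of_mem_C2 {θ s : ℝ} (h0 : 0 ≤ θ) (h8 : θ ≤ 8) (hs0 : 0 ≤ s) (hs1 : s ≤ 1)
    (h : pi (θ, s) ∈ C2) : s = 0 := by
  obtain ⟨p, hp, h1⟩ := h
  rw [mem_Scirc] at h1
  have h2 : |p.1.1 - 1 / 2| ≤ 1 / 4 := by rw [← h1]; exact le_max_left _ _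
  have h3 := rel_off (qm_eq.mp hp) (by linarith)
  rw [h3, sqp_val h0 h8 hs0 hs1] at h1
  simp only at h1
  have h4 : |cx θ s - 1 / 2| ≤ 1 / 4 := by rw [← h1]; exact le_max_left _ _
  have h5 : |cy θ s| ≤ 1 / 4 := by rw [← h1]; exact le_max_right _ _
  rw [cx_abs hs0] at h4
  rw [cy_abs hs0] at h5
  obtain ⟨b1, b2, b3⟩ := s_bd h0 h8
  rcases b3 with b3 | b3
  · rw [b3] at h4; linarith
  · rw [b3] at h5; linarith

lemma of_mem_C1 {θ s : ℝ} (h0 : 0 ≤ θ) (h8 : θ ≤ 8) (hs0 : 0 ≤ s) (hs1 : s ≤ 1)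
    (h : pi (θ, s) ∈ C1) : s = 1 ∧ θ ∈ Set.Icc (1 : ℝ) 3 ∪ Set.Icc 5 7 := by
  obtain ⟨p, hp, h1⟩ := h
  have h2 : |p.1.2| = 1 := by rcases h1 with h1 | h1 <;> rw [h1] <;> norm_num
  have h3 : |p.1.2| = |(sqp (θ, s)).1.2| := by
    rcases qm_eq.mp hp with h | ⟨-, -, h⟩ | ⟨-, -, h⟩
    · rw [h]
    · rw [h, abs_neg]
    · rw [h, abs_neg]
  rw [h2, sqp_val h0 h8 hs0 hs1] at h3
  simp only at h3
  rw [cy_abs hs0] at h3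
  obtain ⟨b1, b2, b3⟩ := s_bd h0 h8
  have h4 : s = 1 := by nlinarith
  refine ⟨h4, ?_⟩
  subst h4
  have h5 : |s2 θ| = 1 := by linarith
  have h6 : s2 θ = 1 ∨ s2 θ = -1 := eq_or_eq_neg_of_abs_eq h5
  have c1 := s_cases h0 h8
  simp only [Set.mem_union, Set.mem_Icc]
  clear b1 b2 b3 h5 h3 h2
  grind

/-! ### Descent -/

lemma descent {Z : Type*} [TopologicalSpace Z] (P : Set (ℝ × ℝ)) (hP : IsCompact P) (S : Set X)
    (hm : ∀ p ∈ P, pi p ∈ S) (hsurj : ∀ x ∈ S, ∃ p ∈ P, x = pi p) (h : ℝ × ℝ → Z)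
    (hc : ContinuousOn h P) (hcomp : ∀ p ∈ P, ∀ q ∈ P, pi p = pi q → h p = h q) :
    ∃ k : C(S, Z), ∀ p (hp : p ∈ P), k ⟨pi p, hm p hp⟩ = h p := by
  haveI : CompactSpace P := isCompact_iff_compactSpace.mp hP
  let ρ : C(P, S) := ⟨fun p => ⟨pi p, hm p p.2⟩,
    (continuous_pi'.comp continuous_subtype_val).subtype_mk _⟩
  have hq : Topology.IsQuotientMap ρ := by
    refine ρ.continuous.isClosedMap.isQuotientMap ρ.continuous ?_
    rintro ⟨x, hx⟩
    obtain ⟨p, hp, h1⟩ := hsurj x hx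
    exact ⟨⟨p, hp⟩, Subtype.ext h1.symm⟩
  let h' : C(P, Z) := ⟨fun p => h p, hc.restrict⟩
  have hh : ∀ p q, ρ p = ρ q → h' p = h' q := by
    intro p q hpq
    exact hcomp p p.2 q q.2 (congrArg Subtype.val hpq)
  refine ⟨hq.lift h' hh, ?_⟩
  intro p hp
  exact congr_fun (congrArg DFunLike.coe (hq.lift_comp h' hh)) (⟨p, hp⟩ : P)

/-- Descent for `X`. -/
lemma descentX {Z : Type*} [TopologicalSpace Z] (h : ℝ × ℝ → Z) (hc : ContinuousOn h Rect)
    (h1 : ∀ s, 0 ≤ s → s ≤ 1 → h (0, s) = h (8, s))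
    (h2 : ∀ θ, 0 ≤ θ → θ ≤ 4 → (θ ≤ 1 ∨ 3 ≤ θ) → h (θ, 1) = h (θ + 4, 1)) :
    ∃ k : C(X, Z), ∀ θ s, 0 ≤ θ → θ ≤ 8 → 0 ≤ s → s ≤ 1 → k (pi (θ, s)) = h (θ, s) := by
  obtain ⟨k, hk⟩ := descent Rect (isCompact_Icc.prod isCompact_Icc) Set.univ (fun _ _ => trivial)
    (by
      intro x _
      obtain ⟨θ, s, a1, a2, a3, a4, rfl⟩ := pi_surj x
      exact ⟨(θ, s), ⟨⟨a1, a2⟩, ⟨a3, a4⟩⟩, rfl⟩) h hc (by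
      rintro ⟨θ, s⟩ ⟨⟨a1, a2⟩, ⟨a3, a4⟩⟩ ⟨θ', s'⟩ ⟨⟨a1', a2'⟩, ⟨a3', a4'⟩⟩ e
      simp only at a1 a2 a3 a4 a1' a2' a3' a4'
      obtain ⟨rfl, e1 | ⟨rfl, rfl⟩ | ⟨rfl, rfl⟩ | ⟨rfl, rfl, e1⟩ | ⟨rfl, rfl, e1⟩⟩ :=
        pi_fiber a1 a2 a3 a4 a1' a2' a3' a4' e
      · rw [e1]
      · exact h1 s a3 a4
      · exact (h1 s a3 a4).symm
      · exact h2 θ a1 (by linarith) (e1.imp id And.left)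
      · exact (h2 θ' a1' (by linarith) (e1.imp id And.left)).symm)
  refine ⟨k.comp ⟨fun x => ⟨x, trivial⟩, by fun_prop⟩, ?_⟩
  intro θ s a1 a2 a3 a4
  exact hk (θ, s) ⟨⟨a1, a2⟩, ⟨a3, a4⟩⟩

/-- Descent for `C2`. -/
lemma descentC2 {Z : Type*} [TopologicalSpace Z] (h : ℝ → Z) (hc : Continuous h)
    (h1 : h 0 = h 8) :
    ∃ k : C(C2, Z), ∀ x : C2, ∃ θ, 0 ≤ θ ∧ θ ≤ 8 ∧ (x : X) = pi (θ, 0) ∧ k x = h θ := by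
  have hm : ∀ p ∈ (Set.Icc 0 8 ×ˢ {0} : Set (ℝ × ℝ)), pi p ∈ C2 := by
    rintro ⟨θ, s⟩ ⟨⟨a1, a2⟩, rfl⟩
    exact pi_mem_C2 a1 a2
  have hsurj : ∀ x ∈ C2, ∃ p ∈ (Set.Icc 0 8 ×ˢ {0} : Set (ℝ × ℝ)), x = pi p := by
    intro x hx
    obtain ⟨θ, s, a1, a2, a3, a4, rfl⟩ := pi_surj x
    exact ⟨(θ, s), ⟨⟨a1, a2⟩, of_mem_C2 a1 a2 a3 a4 hx⟩, rfl⟩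
  obtain ⟨k, hk⟩ := descent (Set.Icc 0 8 ×ˢ {0}) (isCompact_Icc.prod isCompact_singleton) C2 hm
    hsurj (fun p => h p.1) (by fun_prop) (by
      rintro ⟨θ, s⟩ ⟨⟨a1, a2⟩, h3⟩ ⟨θ', s'⟩ ⟨⟨a1', a2'⟩, h3'⟩ e
      simp only [Set.mem_singleton_iff] at a1 a2 a1' a2' h3 h3'
      subst h3 h3'
      obtain ⟨-, e1 | ⟨rfl, rfl⟩ | ⟨rfl, rfl⟩ | ⟨e0, -⟩ | ⟨e0, -⟩⟩ :=
        pi_fiber a1 a2 le_rfl zero_le_one a1' a2' le_rfl zero_le_one e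
      · simp [e1]
      · exact h1
      · exact h1.symm
      · norm_num at e0
      · norm_num at e0)
  refine ⟨k, ?_⟩
  rintro ⟨x, hx⟩
  obtain ⟨⟨θ, s⟩, hp, rfl⟩ := hsurj x hx
  obtain ⟨⟨a1, a2⟩, h3⟩ := id hp
  simp only [Set.mem_singleton_iff] at a1 a2 h3
  subst h3
  exact ⟨θ, a1, a2, rfl, hk _ hp⟩

/-- Descent for `C1`. -/
lemma descentC1 {Z : Type*} [TopologicalSpace Z] (h : ℝ → Z)
    (hc : ContinuousOn h (Set.Icc (1 : ℝ) 3 ∪ Set.Icc 5 7))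
    (h1 : h 1 = h 5) (h2 : h 3 = h 7) :
    ∃ k : C(C1, Z), ∀ x : C1, ∃ θ, θ ∈ Set.Icc (1 : ℝ) 3 ∪ Set.Icc 5 7 ∧ (x : X) = pi (θ, 1) ∧
      k x = h θ := by
  have hb : ∀ θ : ℝ, θ ∈ Set.Icc (1 : ℝ) 3 ∪ Set.Icc 5 7 → 0 ≤ θ ∧ θ ≤ 8 := by
    rintro θ (⟨a, b⟩ | ⟨a, b⟩) <;> constructor <;> linarith
  have hm : ∀ p ∈ ((Set.Icc (1 : ℝ) 3 ∪ Set.Icc 5 7) ×ˢ {1} : Set (ℝ × ℝ)), pi p ∈ C1 := by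
    rintro ⟨θ, s⟩ ⟨a1, rfl⟩
    exact pi_mem_C1 a1
  have hsurj : ∀ x ∈ C1, ∃ p ∈ ((Set.Icc (1 : ℝ) 3 ∪ Set.Icc 5 7) ×ˢ {1} : Set (ℝ × ℝ)),
      x = pi p := by
    intro x hx
    obtain ⟨θ, s, a1, a2, a3, a4, rfl⟩ := pi_surj x
    have := of_mem_C1 a1 a2 a3 a4 hx
    exact ⟨(θ, s), ⟨this.2, this.1⟩, rfl⟩
  obtain ⟨k, hk⟩ := descent ((Set.Icc (1 : ℝ) 3 ∪ Set.Icc 5 7) ×ˢ {1})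
    ((isCompact_Icc.union isCompact_Icc).prod isCompact_singleton) C1 hm
    hsurj (fun p => h p.1) (hc.comp continuousOn_fst (fun p hp => hp.1)) (by
      rintro ⟨θ, s⟩ ⟨a, h3⟩ ⟨θ', s'⟩ ⟨a', h3'⟩ e
      simp only [Set.mem_singleton_iff] at a a' h3 h3'
      subst h3 h3'
      have b := hb _ a
      have b' := hb _ a'
      have key := pi_fiber b.1 b.2 zero_le_one le_rfl b'.1 b'.2 zero_le_one le_rfl e
      simp only [Set.mem_union, Set.mem_Icc] at a a'
      have : θ = θ' ∨ (θ = 1 ∧ θ' = 5) ∨ (θ = 5 ∧ θ' = 1) ∨ (θ = 3 ∧ θ' = 7) ∨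
        (θ = 7 ∧ θ' = 3) := by
        clear e
        grind
      rcases this with rfl | ⟨rfl, rfl⟩ | ⟨rfl, rfl⟩ | ⟨rfl, rfl⟩ | ⟨rfl, rfl⟩
      · rfl
      · exact h1
      · exact h1.symm
      · exact h2
      · exact h2.symm)
  refine ⟨k, ?_⟩
  rintro ⟨x, hx⟩
  obtain ⟨⟨θ, s⟩, hp, rfl⟩ := hsurj x hx
  obtain ⟨a, h3⟩ := id hp
  simp only [Set.mem_singleton_iff] at a h3
  subst h3
  exact ⟨θ, a, rfl, hk _ hp⟩

/-! ### The two concrete data -/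

noncomputable def Yb (i : Fin 3) (a : ℝ) : Y := pY (pt 1 i a)

lemma continuous_Yb (i : Fin 3) : Continuous (Yb i) := pY.continuous.comp (continuous_pt 1 i)

lemma Yb_zero (i j : Fin 3) : Yb i 0 = Yb j 0 := by
  unfold Yb; rw [pt_zero 1 i j]

lemma Yb_one (i j : Fin 3) : Yb i 1 = Yb j 1 := by
  unfold Yb
  have h : pt ((c j) * (c i)⁻¹) i 1 = pt 1 j 1 := pt_one (by group)
  rw [← h]
  have : pt ((c j) * (c i)⁻¹) i 1 = ((c j) * (c i)⁻¹) • pt 1 i 1 := by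
    rw [smul_pt, mul_one]
  rw [this, pY_smul]

lemma Yb_Ex {i : Fin 3} (hi : i ≠ 2) {a : ℝ} (ha : a ∈ Set.Icc (0 : ℝ) 1) : Yb i a ∈ pY '' Ex :=
  ⟨_, ⟨1, i, a, ha, hi, rfl⟩, rfl⟩

lemma descentH (h : (ℝ × ℝ) × unitInterval → X) (hc : Continuous h)
    (h1 : ∀ u s, 0 ≤ s → s ≤ 1 → h ((0, s), u) = h ((8, s), u))
    (h2 : ∀ u θ, 0 ≤ θ → θ ≤ 4 → (θ ≤ 1 ∨ 3 ≤ θ) → h ((θ, 1), u) = h ((θ + 4, 1), u)) :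
    ∃ K : C(unitInterval × X, X), ∀ u θ s, 0 ≤ θ → θ ≤ 8 → 0 ≤ s → s ≤ 1 →
      K (u, pi (θ, s)) = h ((θ, s), u) := by
  let H : C((ℝ × ℝ) × unitInterval, X) := ⟨h, hc⟩
  obtain ⟨k, hk⟩ := descentX (fun z => H.curry z) (H.curry.continuous.continuousOn)
    (fun s hs0 hs1 => ContinuousMap.ext fun u => h1 u s hs0 hs1)
    (fun θ h0 h4 h => ContinuousMap.ext fun u => h2 u θ h0 h4 h)
  refine ⟨⟨fun p => k p.2 p.1, ?_⟩, fun u θ s a b c d => ?_⟩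
  · exact (ContinuousMap.continuous_uncurry_of_continuous k).comp continuous_swap
  · show k (pi (θ, s)) u = _
    rw [hk θ s a b c d]; rfl

/-! #### The circle `C1` -/

noncomputable def h1fun (θ : ℝ) : Y :=
  if θ ≤ 1 then Yb 2 ((1 - θ) / 2) else if θ ≤ 3 then Yb 0 ((θ - 1) / 2) else
    if θ ≤ 5 then Yb 2 ((5 - θ) / 2) else if θ ≤ 7 then Yb 1 ((θ - 5) / 2) else
      Yb 2 ((9 - θ) / 2)

lemma continuous_h1fun : Continuous h1fun := by
  have hY := continuous_Yb
  unfold h1fun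
  refine Continuous.if_le ((hY 2).comp (by fun_prop)) (Continuous.if_le ((hY 0).comp (by fun_prop))
    (Continuous.if_le ((hY 2).comp (by fun_prop)) (Continuous.if_le ((hY 1).comp (by fun_prop))
    ((hY 2).comp (by fun_prop)) continuous_id continuous_const ?_) continuous_id continuous_const
    ?_) continuous_id continuous_const ?_) continuous_id continuous_const ?_
  · rintro x rfl; norm_num [Yb_one 1 2]
  · rintro x rfl; norm_num [Yb_zero 1 2]
  · rintro x rfl; norm_num [Yb_one 0 2]
  · rintro x rfl; norm_num [Yb_zero 0 2]

lemma h1fun_a {θ : ℝ} (h : θ ≤ 1) : h1fun θ = Yb 2 ((1 - θ) / 2) := by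
  rw [h1fun, if_pos h]

lemma h1fun_b {θ : ℝ} (h : 1 ≤ θ) (h' : θ ≤ 3) : h1fun θ = Yb 0 ((θ - 1) / 2) := by
  rcases h.eq_or_lt with rfl | h
  · rw [h1fun_a le_rfl]; norm_num [Yb_zero 0 2]
  · rw [h1fun, if_neg (by linarith), if_pos h']

lemma h1fun_c {θ : ℝ} (h : 3 ≤ θ) (h' : θ ≤ 5) : h1fun θ = Yb 2 ((5 - θ) / 2) := by
  rcases h.eq_or_lt with rfl | h
  · rw [h1fun_b (by norm_num) le_rfl]; norm_num [Yb_one 0 2]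
  · rw [h1fun, if_neg (by linarith), if_neg (by linarith), if_pos h']

lemma h1fun_d {θ : ℝ} (h : 5 ≤ θ) (h' : θ ≤ 7) : h1fun θ = Yb 1 ((θ - 5) / 2) := by
  rcases h.eq_or_lt with rfl | h
  · rw [h1fun_c (by norm_num) le_rfl]; norm_num [Yb_zero 1 2]
  · rw [h1fun, if_neg (by linarith), if_neg (by linarith), if_neg (by linarith), if_pos h']

lemma h1fun_e {θ : ℝ} (h : 7 ≤ θ) : h1fun θ = Yb 2 ((9 - θ) / 2) := by
  rcases h.eq_or_lt with rfl | h
  · rw [h1fun_d (by norm_num) le_rfl]; norm_num [Yb_one 1 2]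
  · rw [h1fun, if_neg (by linarith), if_neg (by linarith), if_neg (by linarith),
      if_neg (by linarith)]

noncomputable def A1 (i : Fin 3) (a : ℝ) : X :=
  if i = 0 then pi (1 + 2 * a, 1) else if i = 1 then pi (5 + 2 * a, 1) else pi (5 - 2 * a, 1)

lemma A1_0 (a : ℝ) : A1 0 a = pi (1 + 2 * a, 1) := rfl
lemma A1_1 (a : ℝ) : A1 1 a = pi (5 + 2 * a, 1) := rfl
lemma A1_2 (a : ℝ) : A1 2 a = pi (5 - 2 * a, 1) := rfl

lemma exists_TD1 : Nonempty (TD C1) := by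
  obtain ⟨phi, hphi⟩ := descentX (fun z => h1fun z.1)
    (continuous_h1fun.comp continuous_fst).continuousOn
    (fun s _ _ => by
      show h1fun 0 = h1fun 8
      rw [h1fun_a (by norm_num), h1fun_e (by norm_num)]; norm_num)
    (fun θ h0 h4 h => by
      show h1fun θ = h1fun (θ + 4)
      rcases h with h | h
      · rw [h1fun_a h, h1fun_c (by linarith) (by linarith)]; congr 1; ring
      · rw [h1fun_c h (by linarith), h1fun_e (by linarith)]; congr 1; ring)
  obtain ⟨K, hK⟩ := descentH (fun p => pi (p.1.1, cl 1 p.1.2 + (p.2 : ℝ) * (1 - cl 1 p.1.2)))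
    (continuous_pi'.comp (by have := continuous_cl 1; fun_prop))
    (fun u s hs0 hs1 => by
      have h0 := u.2.1
      have h1 := u.2.2
      simp only [cl_eq hs0 hs1]
      apply pi_zero_eight <;> nlinarith)
    (fun u θ h0 h4 h => by
      simp only [cl_eq (zero_le_one) (le_refl (1 : ℝ))]
      simpa using pi_seam h0 h4 h)
  refine ⟨⟨A1, ?_, ?_, ?_, ?_, phi, ?_, K, ?_, ?_, ?_⟩⟩
  · have := continuous_pi'
    intro i
    fin_cases i
    · exact continuous_pi'.comp (by fun_prop : Continuous fun a : ℝ => (1 + 2 * a, (1 : ℝ)))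
    · exact continuous_pi'.comp (by fun_prop : Continuous fun a : ℝ => (5 + 2 * a, (1 : ℝ)))
    · exact continuous_pi'.comp (by fun_prop : Continuous fun a : ℝ => (5 - 2 * a, (1 : ℝ)))
  · have h := @pi_seam 1 (by norm_num) (by norm_num) (by norm_num)
    norm_num at h
    intro i
    fin_cases i
    · rfl
    · show A1 1 0 = A1 0 0
      rw [A1_0, A1_1]; norm_num [h]
    · show A1 2 0 = A1 0 0
      rw [A1_0, A1_2]; norm_num [h]
  · have h := @pi_seam 3 (by norm_num) (by norm_num) (by norm_num)
    norm_num at h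
    intro i
    fin_cases i
    · rfl
    · show A1 1 1 = A1 0 1
      rw [A1_0, A1_1]; norm_num [h]
    · show A1 2 1 = A1 0 1
      rw [A1_0, A1_2]; norm_num
  · rintro i hi a ⟨ha0, ha1⟩
    have : i = 0 ∨ i = 1 := by omega
    rcases this with rfl | rfl
    · exact pi_mem_C1 (Or.inl ⟨by linarith, by linarith⟩)
    · exact pi_mem_C1 (Or.inr ⟨by linarith, by linarith⟩)
  · intro z hz
    obtain ⟨θ, s, h0, h8, hs0, hs1, rfl⟩ := pi_surj z
    rw [hphi θ s h0 h8 hs0 hs1]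
    obtain ⟨rfl, h | h⟩ := of_mem_C1 h0 h8 hs0 hs1 hz
    · rw [h1fun_b h.1 h.2]
      exact Yb_Ex (by decide) ⟨by linarith [h.1], by linarith [h.2]⟩
    · rw [h1fun_d h.1 h.2]
      exact Yb_Ex (by decide) ⟨by linarith [h.1], by linarith [h.2]⟩
  · intro z
    obtain ⟨θ, s, h0, h8, hs0, hs1, rfl⟩ := pi_surj z
    rw [hK _ θ s h0 h8 hs0 hs1]
    simp [cl_eq hs0 hs1]
  · intro z
    obtain ⟨θ, s, h0, h8, hs0, hs1, rfl⟩ := pi_surj z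
    rw [hK _ θ s h0 h8 hs0 hs1, hphi θ s h0 h8 hs0 hs1]
    have e1 : cl 1 s + ((1 : unitInterval) : ℝ) * (1 - cl 1 s) = 1 := by simp
    simp only [e1]
    rcases le_total θ 1 with h | h
    · refine ⟨2, (1 - θ) / 2, ⟨by linarith, by linarith⟩, h1fun_a h, ?_⟩
      rw [pi_seam h0 (by linarith) (Or.inl h), A1_2]; congr 2; ring
    rcases le_total θ 3 with h' | h'
    · refine ⟨0, (θ - 1) / 2, ⟨by linarith, by linarith⟩, h1fun_b h h', ?_⟩
      rw [A1_0]; congr 2; ring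
    rcases le_total θ 5 with h5 | h5
    · refine ⟨2, (5 - θ) / 2, ⟨by linarith, by linarith⟩, h1fun_c h' h5, ?_⟩
      rw [A1_2]; congr 2; ring
    rcases le_total θ 7 with h7 | h7
    · refine ⟨1, (θ - 5) / 2, ⟨by linarith, by linarith⟩, h1fun_d h5 h7, ?_⟩
      rw [A1_1]; congr 2; ring
    · refine ⟨2, (9 - θ) / 2, ⟨by linarith, by linarith⟩, h1fun_e h7, ?_⟩
      have h := @pi_seam (θ - 4) (by linarith) (by linarith) (Or.inr (by linarith))
      rw [sub_add_cancel] at h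
      rw [A1_2, ← h]; congr 2; ring
  · intro t z hz
    obtain ⟨θ, s, h0, h8, hs0, hs1, rfl⟩ := pi_surj z
    rw [hK _ θ s h0 h8 hs0 hs1]
    obtain ⟨rfl, h⟩ := of_mem_C1 h0 h8 hs0 hs1 hz
    simp [cl_eq hs0 hs1]

/-! #### The circle `C2` -/

noncomputable def tau (x s : ℝ) : ℝ := max (-(2 + s)) (min (2 + s) (x * (1 + 2 * s)))

lemma continuous_tau : Continuous fun p : ℝ × ℝ => tau p.1 p.2 := by
  unfold tau; fun_prop

lemma tau_abs {x s : ℝ} (hs : 0 ≤ s) : |tau x s| ≤ 2 + s := by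
  rw [abs_le]
  exact ⟨le_max_left _ _, max_le (by linarith) (min_le_left _ _)⟩

lemma tau_hi {x s : ℝ} (hs : 0 ≤ s) (h : 2 + s ≤ x * (1 + 2 * s)) : tau x s = 2 + s := by
  rw [tau, min_eq_left h, max_eq_right (by linarith)]

lemma tau_lo {x s : ℝ} (hs : 0 ≤ s) (h : x * (1 + 2 * s) ≤ -(2 + s)) : tau x s = -(2 + s) := by
  rw [tau, min_eq_right (by linarith), max_eq_left h]

lemma tau_zero {x : ℝ} (h : -2 ≤ x) (h' : x ≤ 2) : tau x 0 = x := by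
  rw [tau]; norm_num [h, h']

noncomputable def te (t : ℝ) : ℝ := max (-2) (min 2 t)
noncomputable def ts (t : ℝ) : ℝ := max (|t| - 2) 0

lemma t_hi {t : ℝ} (h : 2 ≤ t) : te t = 2 ∧ ts t = t - 2 := by
  constructor
  · rw [te, min_eq_left h]; norm_num
  · rw [ts, abs_of_nonneg (by linarith), max_eq_left (by linarith)]

lemma t_lo {t : ℝ} (h : t ≤ -2) : te t = -2 ∧ ts t = -t - 2 := by
  constructor
  · rw [te, min_eq_right (by linarith), max_eq_left h]
  · rw [ts, abs_of_nonpos (by linarith), max_eq_left (by linarith)]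

lemma t_mid {t : ℝ} (h : -2 ≤ t) (h' : t ≤ 2) : te t = t ∧ ts t = 0 := by
  constructor
  · rw [te, min_eq_right h', max_eq_right h]
  · have := abs_le.mpr ⟨h, h'⟩
    rw [ts, max_eq_right (by linarith)]

noncomputable def P2 (b x s u : ℝ) : X :=
  pi (b + x + u * (te (tau x s) - x), s + u * (ts (tau x s) - s))

lemma continuous_P2 (b : ℝ) : Continuous fun p : ℝ × ℝ × ℝ => P2 b p.1 p.2.1 p.2.2 := by
  apply continuous_pi'.comp
  have h := continuous_tau
  have h1 : Continuous fun p : ℝ × ℝ × ℝ => tau p.1 p.2.1 := by unfold tau; fun_prop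
  have h2 : Continuous te := by unfold te; fun_prop
  have h3 : Continuous ts := by unfold ts; fun_prop
  have h4 := h2.comp h1
  have h5 := h3.comp h1
  simp only [Function.comp_def] at h4 h5
  fun_prop

lemma P2_right {b s : ℝ} (u : ℝ) (hs : 0 ≤ s) : P2 b 2 s u = pi (b + 2, s) := by
  have h := @tau_hi 2 s hs (by linarith)
  have h' := t_hi (show 2 ≤ 2 + s by linarith)
  rw [P2, h, h'.1, h'.2]; congr 2 <;> ring

lemma P2_left {b s : ℝ} (u : ℝ) (hs : 0 ≤ s) : P2 b (-2) s u = pi (b - 2, s) := by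
  have h := @tau_lo (-2) s hs (by linarith)
  have h' := t_lo (show -(2 + s) ≤ -2 by linarith)
  rw [P2, h, h'.1, h'.2]; congr 2 <;> ring

lemma P2_seam {x : ℝ} {u : ℝ} (hu0 : 0 ≤ u) (hu1 : u ≤ 1) (h0 : -2 ≤ x) (h4 : x ≤ 2)
    (h : x ≤ -1 ∨ 1 ≤ x) : P2 2 x 1 u = P2 6 x 1 u := by
  rcases h with h | h
  · have h5 := @tau_lo x 1 (by norm_num) (by linarith)
    have h' := t_lo (show -(2 + 1) ≤ (-2 : ℝ) by linarith)
    rw [P2, P2, h5, h'.1, h'.2]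
    have := @pi_seam (2 + x + u * (-2 - x)) (by nlinarith) (by nlinarith) (Or.inl (by nlinarith))
    convert this using 2
    · norm_num
    · norm_num; ring
  · have h5 := @tau_hi x 1 (by norm_num) (by linarith)
    have h' := t_hi (show (2 : ℝ) ≤ 2 + 1 by linarith)
    rw [P2, P2, h5, h'.1, h'.2]
    have := @pi_seam (2 + x + u * (2 - x)) (by nlinarith) (by nlinarith) (Or.inr (by nlinarith))
    convert this using 2
    · norm_num
    · norm_num; ring

noncomputable def U2 (t : ℝ) : Y :=
  if t ≤ -2 then Yb 2 ((-t - 2) / 2) else if t ≤ 2 then Yb 0 ((t + 2) / 4) else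
    Yb 2 (1 - (t - 2) / 2)

noncomputable def L2 (t : ℝ) : Y :=
  if t ≤ -2 then Yb 2 (1 - (-t - 2) / 2) else if t ≤ 2 then Yb 1 ((2 - t) / 4) else
    Yb 2 ((t - 2) / 2)

lemma continuous_U2 : Continuous U2 := by
  have hY := continuous_Yb
  unfold U2
  refine Continuous.if_le ((hY 2).comp (by fun_prop)) (Continuous.if_le ((hY 0).comp (by fun_prop))
    ((hY 2).comp (by fun_prop)) continuous_id continuous_const ?_) continuous_id continuous_const ?_
  · rintro x rfl; norm_num [Yb_one 0 2]
  · rintro x rfl; norm_num [Yb_zero 0 2]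

lemma continuous_L2 : Continuous L2 := by
  have hY := continuous_Yb
  unfold L2
  refine Continuous.if_le ((hY 2).comp (by fun_prop)) (Continuous.if_le ((hY 1).comp (by fun_prop))
    ((hY 2).comp (by fun_prop)) continuous_id continuous_const ?_) continuous_id continuous_const ?_
  · rintro x rfl; norm_num [Yb_zero 1 2]
  · rintro x rfl; norm_num [Yb_one 1 2]

lemma U2_lo {t : ℝ} (h : t ≤ -2) : U2 t = Yb 2 ((-t - 2) / 2) := by rw [U2, if_pos h]

lemma L2_lo {t : ℝ} (h : t ≤ -2) : L2 t = Yb 2 (1 - (-t - 2) / 2) := by rw [L2, if_pos h]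

lemma U2_mid {t : ℝ} (h : -2 ≤ t) (h' : t ≤ 2) : U2 t = Yb 0 ((t + 2) / 4) := by
  rcases h.eq_or_lt with rfl | h
  · rw [U2_lo le_rfl]; norm_num [Yb_zero 0 2]
  · rw [U2, if_neg (by linarith), if_pos h']

lemma L2_mid {t : ℝ} (h : -2 ≤ t) (h' : t ≤ 2) : L2 t = Yb 1 ((2 - t) / 4) := by
  rcases h.eq_or_lt with rfl | h
  · rw [L2_lo le_rfl]; norm_num [Yb_one 1 2]
  · rw [L2, if_neg (by linarith), if_pos h']

lemma U2_hi {t : ℝ} (h : 2 ≤ t) : U2 t = Yb 2 (1 - (t - 2) / 2) := by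
  rcases h.eq_or_lt with rfl | h
  · rw [U2_mid (by norm_num) le_rfl]; norm_num [Yb_one 0 2]
  · rw [U2, if_neg (by linarith), if_neg (by linarith)]

lemma L2_hi {t : ℝ} (h : 2 ≤ t) : L2 t = Yb 2 ((t - 2) / 2) := by
  rcases h.eq_or_lt with rfl | h
  · rw [L2_mid (by norm_num) le_rfl]; norm_num [Yb_zero 1 2]
  · rw [L2, if_neg (by linarith), if_neg (by linarith)]

noncomputable def A2 (i : Fin 3) (a : ℝ) : X :=
  if i = 0 then pi (4 * a, 0) else if i = 1 then pi (8 - 4 * a, 0) else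
    if a ≤ 1 / 2 then pi (0, 2 * a) else pi (4, 2 - 2 * a)

lemma A2_0 (a : ℝ) : A2 0 a = pi (4 * a, 0) := rfl
lemma A2_1 (a : ℝ) : A2 1 a = pi (8 - 4 * a, 0) := rfl
lemma A2_2 (a : ℝ) : A2 2 a = if a ≤ 1 / 2 then pi (0, 2 * a) else pi (4, 2 - 2 * a) := rfl

lemma pi_04 : pi (0, 1) = pi (4, 1) := by
  have h := @pi_seam 0 (by norm_num) (by norm_num) (by norm_num)
  norm_num at h
  exact h

lemma A2_2lo {a : ℝ} (h : a ≤ 1 / 2) : A2 2 a = pi (0, 2 * a) := by rw [A2_2, if_pos h]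

lemma A2_2hi {a : ℝ} (h : 1 / 2 ≤ a) : A2 2 a = pi (4, 2 - 2 * a) := by
  rcases h.eq_or_lt with rfl | h
  · rw [A2_2lo le_rfl]; norm_num [pi_04]
  · rw [A2_2, if_neg (by linarith)]

noncomputable def h2fun (p : ℝ × ℝ) : Y :=
  if p.1 ≤ 4 then U2 (tau (p.1 - 2) (cl 1 p.2)) else L2 (tau (p.1 - 6) (cl 1 p.2))

lemma UL_mid {s : ℝ} (hs : 0 ≤ s) : U2 (tau 2 s) = L2 (tau (-2) s) := by
  rw [tau_hi hs (by linarith), tau_lo hs (by linarith), U2_hi (by linarith), L2_lo (by linarith)]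
  congr 1; ring

lemma h2fun_up {θ s : ℝ} (h : θ ≤ 4) (hs0 : 0 ≤ s) (hs1 : s ≤ 1) :
    h2fun (θ, s) = U2 (tau (θ - 2) s) := by
  rw [h2fun, if_pos h, cl_eq hs0 hs1]

lemma h2fun_low {θ s : ℝ} (h : 4 ≤ θ) (hs0 : 0 ≤ s) (hs1 : s ≤ 1) :
    h2fun (θ, s) = L2 (tau (θ - 6) s) := by
  rcases h.eq_or_lt with rfl | h
  · rw [h2fun_up le_rfl hs0 hs1]
    have := UL_mid hs0
    norm_num; exact this
  · rw [h2fun, if_neg (by simpa using h), cl_eq hs0 hs1]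

lemma continuous_h2fun : Continuous h2fun := by
  have h1 := continuous_cl 1
  have h2 := continuous_tau
  refine Continuous.if_le (continuous_U2.comp ?_) (continuous_L2.comp ?_) continuous_fst
    continuous_const ?_
  · exact h2.comp (by fun_prop : Continuous fun p : ℝ × ℝ => (p.1 - 2, cl 1 p.2))
  · exact h2.comp (by fun_prop : Continuous fun p : ℝ × ℝ => (p.1 - 6, cl 1 p.2))
  · intro p hp
    rw [hp]
    have := UL_mid (cl_mem zero_le_one p.2).1
    norm_num; exact this

noncomputable def K2fun (p : (ℝ × ℝ) × unitInterval) : X :=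
  if p.1.1 ≤ 4 then P2 2 (p.1.1 - 2) (cl 1 p.1.2) p.2 else P2 6 (p.1.1 - 6) (cl 1 p.1.2) p.2

lemma P2_mid {s : ℝ} (u : ℝ) (hs : 0 ≤ s) : P2 2 (4 - 2) s u = P2 6 (4 - 6) s u := by
  have e1 : (4 : ℝ) - 2 = 2 := by norm_num
  have e2 : (4 : ℝ) - 6 = -2 := by norm_num
  rw [e1, e2, P2_right _ hs, P2_left _ hs]; norm_num

lemma K2_up {θ s : ℝ} {u : unitInterval} (h : θ ≤ 4) (hs0 : 0 ≤ s) (hs1 : s ≤ 1) :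
    K2fun ((θ, s), u) = P2 2 (θ - 2) s u := by
  rw [K2fun, if_pos h, cl_eq hs0 hs1]

lemma K2_low {θ s : ℝ} {u : unitInterval} (h : 4 ≤ θ) (hs0 : 0 ≤ s) (hs1 : s ≤ 1) :
    K2fun ((θ, s), u) = P2 6 (θ - 6) s u := by
  rcases h.eq_or_lt with rfl | h
  · rw [K2_up le_rfl hs0 hs1, P2_mid _ hs0]
  · rw [K2fun, if_neg (by simpa using h), cl_eq hs0 hs1]

lemma continuous_K2aux (b d : ℝ) : Continuous fun p : (ℝ × ℝ) × unitInterval =>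
    P2 b (p.1.1 - d) (cl 1 p.1.2) (p.2 : ℝ) := by
  have h1 := continuous_cl 1
  have h2 : Continuous fun p : (ℝ × ℝ) × unitInterval => (p.1.1 - d, cl 1 p.1.2, (p.2 : ℝ)) := by
    fun_prop
  have h3 := (continuous_P2 b).comp h2
  exact h3

lemma continuous_K2fun : Continuous K2fun := by
  have h1 : Continuous fun p : (ℝ × ℝ) × unitInterval => p.1.1 := by fun_prop
  refine Continuous.if_le (continuous_K2aux 2 2) (continuous_K2aux 6 6) h1 continuous_const ?_
  intro p hp
  simp only [hp]
  exact P2_mid _ (cl_mem zero_le_one _).1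

lemma exists_TD2 : Nonempty (TD C2) := by
  obtain ⟨phi, hphi⟩ := descentX h2fun continuous_h2fun.continuousOn
    (fun s hs0 hs1 => by
      rw [h2fun_up (by norm_num) hs0 hs1, h2fun_low (by norm_num) hs0 hs1,
        tau_lo hs0 (by linarith), tau_hi hs0 (by linarith), U2_lo (by linarith),
        L2_hi (by linarith)]
      congr 1; ring)
    (fun θ h0 h4 h => by
      rw [h2fun_up h4 (by norm_num) le_rfl, h2fun_low (by linarith) (by norm_num) le_rfl]
      have e : θ + 4 - 6 = θ - 2 := by ring
      rw [e]
      rcases h with h | h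
      · rw [tau_lo (by norm_num) (by linarith), U2_lo (by norm_num), L2_lo (by norm_num)]
        congr 1; norm_num
      · rw [tau_hi (by norm_num) (by linarith), U2_hi (by norm_num), L2_hi (by norm_num)]
        congr 1; norm_num)
  obtain ⟨K, hK⟩ := descentH K2fun continuous_K2fun
    (fun u s hs0 hs1 => by
      rw [K2_up (by norm_num) hs0 hs1, K2_low (by norm_num) hs0 hs1]
      have e1 : (0 : ℝ) - 2 = -2 := by norm_num
      have e2 : (8 : ℝ) - 6 = 2 := by norm_num
      rw [e1, e2, P2_left _ hs0, P2_right _ hs0]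
      norm_num
      exact pi_zero_eight hs0 hs1)
    (fun u θ h0 h4 h => by
      rw [K2_up h4 (by norm_num) le_rfl, K2_low (by linarith) (by norm_num) le_rfl]
      have e : θ + 4 - 6 = θ - 2 := by ring
      rw [e]
      refine P2_seam u.2.1 u.2.2 (by linarith) (by linarith) ?_
      rcases h with h | h
      · left; linarith
      · right; linarith)
  refine ⟨⟨A2, ?_, ?_, ?_, ?_, phi, ?_, K, ?_, ?_, ?_⟩⟩
  · intro i
    fin_cases i
    · exact continuous_pi'.comp (by fun_prop : Continuous fun a : ℝ => (4 * a, (0 : ℝ)))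
    · exact continuous_pi'.comp (by fun_prop : Continuous fun a : ℝ => (8 - 4 * a, (0 : ℝ)))
    · refine Continuous.if_le
        (continuous_pi'.comp (by fun_prop : Continuous fun a : ℝ => ((0 : ℝ), 2 * a)))
        (continuous_pi'.comp (by fun_prop : Continuous fun a : ℝ => ((4 : ℝ), 2 - 2 * a)))
        continuous_id continuous_const ?_
      rintro x rfl
      norm_num [pi_04]
  · intro i
    have h := pi_zero_eight (le_refl 0) zero_le_one
    fin_cases i
    · rfl
    · show A2 1 0 = A2 0 0
      rw [A2_0, A2_1]; norm_num [h]
    · show A2 2 0 = A2 0 0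
      rw [A2_0, A2_2lo (by norm_num)]; norm_num
  · intro i
    fin_cases i
    · rfl
    · show A2 1 1 = A2 0 1
      rw [A2_0, A2_1]; norm_num
    · show A2 2 1 = A2 0 1
      rw [A2_0, A2_2hi (by norm_num)]; norm_num
  · rintro i hi a ⟨ha0, ha1⟩
    have : i = 0 ∨ i = 1 := by omega
    rcases this with rfl | rfl
    · exact pi_mem_C2 (by linarith) (by linarith)
    · exact pi_mem_C2 (by linarith) (by linarith)
  · intro z hz
    obtain ⟨θ, s, h0, h8, hs0, hs1, rfl⟩ := pi_surj z
    rw [hphi θ s h0 h8 hs0 hs1]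
    obtain rfl := of_mem_C2 h0 h8 hs0 hs1 hz
    rcases le_total θ 4 with h | h
    · rw [h2fun_up h hs0 hs1, tau_zero (by linarith) (by linarith),
        U2_mid (by linarith) (by linarith)]
      exact Yb_Ex (by decide) ⟨by linarith, by linarith⟩
    · rw [h2fun_low h hs0 hs1, tau_zero (by linarith) (by linarith),
        L2_mid (by linarith) (by linarith)]
      exact Yb_Ex (by decide) ⟨by linarith, by linarith⟩
  · intro z
    obtain ⟨θ, s, h0, h8, hs0, hs1, rfl⟩ := pi_surj z
    rw [hK _ θ s h0 h8 hs0 hs1]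
    rcases le_total θ 4 with h | h
    · rw [K2_up h hs0 hs1, P2]; simp
    · rw [K2_low h hs0 hs1, P2]; simp
  · intro z
    obtain ⟨θ, s, h0, h8, hs0, hs1, rfl⟩ := pi_surj z
    rw [hK _ θ s h0 h8 hs0 hs1, hphi θ s h0 h8 hs0 hs1]
    rcases le_total θ 4 with h | h
    · rw [K2_up h hs0 hs1, h2fun_up h hs0 hs1, P2]
      have hb := abs_le.mp (@tau_abs (θ - 2) s hs0)
      generalize tau (θ - 2) s = t at *
      obtain ⟨hb1, hb2⟩ := hb
      rcases le_total t (-2) with h5 | h5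
      · refine ⟨2, (-t - 2) / 2, ⟨by linarith, by linarith⟩, U2_lo h5, ?_⟩
        rw [A2_2lo (by linarith), (t_lo h5).1, (t_lo h5).2, Set.Icc.coe_one]
        congr 2 <;> ring
      rcases le_total t 2 with h6 | h6
      · refine ⟨0, (t + 2) / 4, ⟨by linarith, by linarith⟩, U2_mid h5 h6, ?_⟩
        rw [A2_0, (t_mid h5 h6).1, (t_mid h5 h6).2, Set.Icc.coe_one]
        congr 2 <;> ring
      · refine ⟨2, 1 - (t - 2) / 2, ⟨by linarith, by linarith⟩, U2_hi h6, ?_⟩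
        rw [A2_2hi (by linarith), (t_hi h6).1, (t_hi h6).2, Set.Icc.coe_one]
        congr 2 <;> ring
    · rw [K2_low h hs0 hs1, h2fun_low h hs0 hs1, P2]
      have hb := abs_le.mp (@tau_abs (θ - 6) s hs0)
      generalize tau (θ - 6) s = t at *
      obtain ⟨hb1, hb2⟩ := hb
      rcases le_total t (-2) with h5 | h5
      · refine ⟨2, 1 - (-t - 2) / 2, ⟨by linarith, by linarith⟩, L2_lo h5, ?_⟩
        rw [A2_2hi (by linarith), (t_lo h5).1, (t_lo h5).2, Set.Icc.coe_one]
        congr 2 <;> ring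
      rcases le_total t 2 with h6 | h6
      · refine ⟨1, (2 - t) / 4, ⟨by linarith, by linarith⟩, L2_mid h5 h6, ?_⟩
        rw [A2_1, (t_mid h5 h6).1, (t_mid h5 h6).2, Set.Icc.coe_one]
        congr 2 <;> ring
      · refine ⟨2, (t - 2) / 2, ⟨by linarith, by linarith⟩, L2_hi h6, ?_⟩
        rw [A2_2lo (by linarith), (t_hi h6).1, (t_hi h6).2, Set.Icc.coe_one]
        have := @pi_zero_eight (t - 2) (by linarith) (by linarith)
        convert this.symm using 3 <;> ring
  · intro t z hz
    obtain ⟨θ, s, h0, h8, hs0, hs1, rfl⟩ := pi_surj z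
    rw [hK _ θ s h0 h8 hs0 hs1]
    obtain rfl := of_mem_C2 h0 h8 hs0 hs1 hz
    rcases le_total θ 4 with h | h
    · have h5 := t_mid (show -2 ≤ θ - 2 by linarith) (by linarith)
      rw [K2_up h hs0 hs1, P2, tau_zero (by linarith) (by linarith), h5.1, h5.2]
      congr 2 <;> ring
    · have h5 := t_mid (show -2 ≤ θ - 6 by linarith) (by linarith)
      rw [K2_low h hs0 hs1, P2, tau_zero (by linarith) (by linarith), h5.1, h5.2]
      congr 2 <;> ring

/-! ### Assembly -/

lemma er_mul0 {a b : G} (ha : er a = 0) (hb : er b = 0) : er (a * b) = 0 := by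
  rw [er_mul, ha, hb]; ring

lemma er_inv0 {a : G} (ha : er a = 0) : er a⁻¹ = 0 := by
  rw [er_inv, ha, neg_zero]

lemma Line_trans {a b : G} {e : E} (he : e ∈ Line a) (h : er (a⁻¹ * b) = 0) : e ∈ Line b := by
  have h1 : b⁻¹ • e = (a⁻¹ * b)⁻¹ • (a⁻¹ • e) := by
    rw [smul_smul]; congr 1; group
  show b⁻¹ • e ∈ Lline
  rw [h1]
  exact Lline_smul (er_inv0 h) he

namespace TD

variable {Cj : Set X} (T : TD Cj)

lemma exists_F (f : C(X, X)) (hmaps : MapsTo f Bd Cj) :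
    ∃ F : C(ℝ × ℝ, E), (∀ z, pY (F z) = T.phi (f (pi z))) ∧
      ∀ θ, 0 ≤ θ → θ ≤ 8 → F (θ, 0) ∈ Lline := by
  obtain ⟨F, hF⟩ := pY_lift (T.phi.comp (f.comp ⟨pi, continuous_pi'⟩))
  have hFc : Continuous fun θ : ℝ => F (θ, 0) := F.continuous.comp (by fun_prop)
  obtain ⟨u, hu⟩ := exists_Line (isPreconnected_Icc (a := (0 : ℝ)) (b := 8)) (t0 := 0)
    (by norm_num) hFc.continuousOn (fun θ hθ => by
      apply Ex_of_pY
      rw [hF]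
      exact T.phiC _ (hmaps (Or.inr (pi_mem_C2 hθ.1 hθ.2))))
  refine ⟨⟨fun z => u⁻¹ • F z, (continuous_const_smul _).comp F.continuous⟩, fun z => ?_,
    fun θ h0 h8 => hu θ ⟨h0, h8⟩⟩
  show pY (u⁻¹ • F z) = _
  rw [pY_smul, hF]; rfl

lemma main {Cj : Set X} (T : TD Cj) (f : C(X, X)) (hCj : Cj ⊆ Bd) (hmaps : MapsTo f Bd Cj)
    (he1 : Essential (restrictMap f (hmaps.mono_left Set.subset_union_left : MapsTo f C1 Cj)))
    (he2 : Essential (restrictMap f (hmaps.mono_left Set.subset_union_right : MapsTo f C2 Cj))) :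
    ∃ g : C(X, X), BoundaryHomotopic f g ∧ (∀ x : X, g x ∈ Cj) ∧
      ∀ x : X, g x = x → x ∈ Cj := by
  obtain ⟨F, hF, hF0⟩ := T.exists_F f hmaps
  have hFs (s : ℝ) : Continuous fun θ : ℝ => F (θ, s) := F.continuous.comp (by fun_prop)
  have hFt (θ : ℝ) : Continuous fun s : ℝ => F (θ, s) := F.continuous.comp (by fun_prop)
  have hFsh : Continuous fun θ : ℝ => F (θ + 4, 1) := F.continuous.comp (by fun_prop)
  -- values of psi along F
  have hpsi : ∀ z, T.psi (F z) = T.K (1, f (pi z)) := fun z => (T.K1_eq (hF z).symm).symm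
  have hpsiB : ∀ z, pi z ∈ Bd → T.psi (F z) = f (pi z) := fun z hz => by
    rw [hpsi, T.KC _ _ (hmaps hz)]
  -- deck transformations
  obtain ⟨k, hk⟩ := lift_unique (isPreconnected_Icc (a := (0 : ℝ)) (b := 1)) ⟨0, by norm_num⟩
    (hFt 8).continuousOn (hFt 0).continuousOn (fun s hs => by
      rw [hF, hF, pi_zero_eight hs.1 hs.2])
  obtain ⟨w, hw⟩ := lift_unique (isPreconnected_Icc (a := (0 : ℝ)) (b := 1)) ⟨0, by norm_num⟩
    hFsh.continuousOn (hFs 1).continuousOn (fun θ hθ => by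
      rw [hF, hF, pi_seam hθ.1 (by linarith [hθ.2]) (Or.inl hθ.2)])
  obtain ⟨v, hv⟩ := lift_unique (isPreconnected_Icc (a := (3 : ℝ)) (b := 4)) ⟨3, by norm_num⟩
    hFsh.continuousOn (hFs 1).continuousOn (fun θ hθ => by
      rw [hF, hF, pi_seam (by linarith [hθ.1]) hθ.2 (Or.inr hθ.1)])
  have hvw : v * w = k := by
    have a1 := hw 0 (by norm_num)
    have a2 := hv 4 (by norm_num)
    have a3 := hk 1 (by norm_num)
    norm_num at a1 a2
    rw [a1, a3, smul_smul] at a2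
    exact (smul_cancel a2).symm
  have hk0 : er k = 0 := by
    have a1 := hk 0 (by norm_num)
    have a2 : F (0, 0) ∈ Line 1 := mem_Line_one.mpr (hF0 0 le_rfl (by norm_num))
    have a3 : F (8, 0) ∈ Line 1 := mem_Line_one.mpr (hF0 8 (by norm_num) le_rfl)
    have a4 := mem_Line_smul k a2
    rw [← a1] at a4
    simpa using Line_inter a3 a4
  have hk1 : k ≠ 1 := by
    rintro rfl
    apply he2
    have a1 := hk 0 (by norm_num)
    rw [one_smul] at a1
    obtain ⟨κ, hκ⟩ := descentC2 (fun θ => F (θ, 0)) (hFs 0) a1.symm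
    refine T.inessential _ κ 1 (fun x => ?_) (fun x => ?_)
    · obtain ⟨θ, h0, h8, -, h⟩ := hκ x
      rw [h, mem_Line_one]
      exact hF0 θ h0 h8
    · obtain ⟨θ, h0, h8, h1, h⟩ := hκ x
      rw [h, hpsiB _ (Or.inr (pi_mem_C2 h0 h8)), ← h1]
      rfl
  -- the two arcs of `C1`
  have hEx : ∀ θ ∈ Set.Icc (1 : ℝ) 3 ∪ Set.Icc 5 7, F (θ, 1) ∈ Ex := fun θ hθ => by
    apply Ex_of_pY
    rw [hF]
    exact T.phiC _ (hmaps (Or.inl (pi_mem_C1 hθ)))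
  obtain ⟨u, hu⟩ := exists_Line (isPreconnected_Icc (a := (1 : ℝ)) (b := 3)) (t0 := 1)
    (by norm_num) (hFs 1).continuousOn (fun θ hθ => hEx θ (Or.inl hθ))
  obtain ⟨y, hy⟩ := exists_Line (isPreconnected_Icc (a := (5 : ℝ)) (b := 7)) (t0 := 5)
    (by norm_num) (hFs 1).continuousOn (fun θ hθ => hEx θ (Or.inr hθ))
  have hw5 : F (5, 1) = w • F (1, 1) := by
    have := hw 1 (by norm_num)
    norm_num at this; exact this
  have hv7 : F (7, 1) = v • F (3, 1) := by
    have := hv 3 (by norm_num)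
    norm_num at this; exact this
  have hyw : er (y⁻¹ * (w * u)) = 0 := by
    refine Line_inter (hy 5 (by norm_num)) ?_
    rw [hw5]
    exact mem_Line_smul w (hu 1 (by norm_num))
  have hyv : er (y⁻¹ * (v * u)) = 0 := by
    refine Line_inter (hy 7 (by norm_num)) ?_
    rw [hv7]
    exact mem_Line_smul v (hu 3 (by norm_num))
  have hconj : er (u⁻¹ * (w⁻¹ * v) * u) = 0 := by
    have : u⁻¹ * (w⁻¹ * v) * u = (y⁻¹ * (w * u))⁻¹ * (y⁻¹ * (v * u)) := by group
    rw [this]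
    exact er_mul0 (er_inv0 hyw) hyv
  have hvk : v = k * w⁻¹ := by rw [← hvw]; group
  have hw0 : er w = 0 := by
    have h1 : er w⁻¹ = 0 := by
      refine core_arith (u := u) hk0 hk1 ?_
      rw [hvk, ← mul_assoc w⁻¹] at hconj
      exact hconj
    have := er_inv0 h1
    rwa [inv_inv] at this
  have hv0 : er v = 0 := by
    rw [hvk]; exact er_mul0 hk0 (er_inv0 hw0)
  have hwv1 : w⁻¹ * v ≠ 1 := by
    intro h
    apply he1
    have hvw' : v = w := by
      have := congrArg (fun z => w * z) h
      simpa using this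
    let κ0 : ℝ → E := fun θ => if θ ≤ 4 then F (θ, 1) else w⁻¹ • F (θ, 1)
    have hlo : ∀ θ ≤ 4, κ0 θ = F (θ, 1) := fun θ h => if_pos h
    have hhi : ∀ θ, 4 < θ → κ0 θ = w⁻¹ • F (θ, 1) := fun θ h => if_neg (not_le.mpr h)
    have hc : ContinuousOn κ0 (Set.Icc 1 3 ∪ Set.Icc 5 7) := by
      refine ContinuousOn.union_of_isClosed ?_ ?_ isClosed_Icc isClosed_Icc
      · refine (hFs 1).continuousOn.congr fun θ hθ => hlo θ (by linarith [hθ.2])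
      · have := (continuous_const_smul w⁻¹).comp (hFs 1)
        refine this.continuousOn.congr fun θ hθ => hhi θ (by linarith [hθ.1])
    obtain ⟨κ, hκ⟩ := descentC1 κ0 hc
      (by rw [hlo 1 (by norm_num), hhi 5 (by norm_num), hw5, inv_smul_smul])
      (by rw [hlo 3 (by norm_num), hhi 7 (by norm_num), hv7, hvw', inv_smul_smul])
    refine T.inessential _ κ u (fun x => ?_) (fun x => ?_)
    · obtain ⟨θ, hθ | hθ, -, h⟩ := hκ x
      · rw [h, hlo θ (by linarith [hθ.2])]
        exact hu θ hθ
      · rw [h, hhi θ (by linarith [hθ.1])]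
        refine Line_trans (mem_Line_smul w⁻¹ (hy θ hθ)) ?_
        have : (w⁻¹ * y)⁻¹ * u = y⁻¹ * (w * u) := by group
        rw [this]; exact hyw
    · obtain ⟨θ, hθ, h1, h⟩ := hκ x
      have h2 : T.psi (κ0 θ) = T.psi (F (θ, 1)) := by
        rcases le_or_gt θ 4 with h4 | h4
        · rw [hlo θ h4]
        · rw [hhi θ h4, psi_smul]
      rw [h, h2, hpsiB _ (Or.inl (pi_mem_C1 hθ)), ← h1]
      rfl
  have hu0 : er u = 0 := er_of_conj (er_mul0 (er_inv0 hw0) hv0) hwv1 hconj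
  have hy0 : er y = 0 := by
    have : y = (w * u) * (y⁻¹ * (w * u))⁻¹ := by group
    rw [this]
    exact er_mul0 (er_mul0 hw0 hu0) (er_inv0 hyw)
  -- the boundary goes to the axis
  have hBd : ∀ θ s, 0 ≤ θ → θ ≤ 8 → 0 ≤ s → s ≤ 1 → pi (θ, s) ∈ Bd → F (θ, s) ∈ Lline := by
    intro θ s h0 h8 hs0 hs1 h
    rcases h with h | h
    · obtain ⟨rfl, hθ | hθ⟩ := of_mem_C1 h0 h8 hs0 hs1 h
      · exact Line_of_er hu0 (hu θ hθ)
      · exact Line_of_er hy0 (hy θ hθ)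
    · obtain rfl := of_mem_C2 h0 h8 hs0 hs1 h
      exact hF0 θ h0 h8
  -- the homotopy
  obtain ⟨H, H0, H1, HL, Hk⟩ := exists_contraction
  obtain ⟨L, hL⟩ := descentH (fun p => T.psi (H ((p.2 : ℝ), F p.1)))
    (T.psi.continuous.comp (H.continuous.comp (by fun_prop)))
    (fun t s hs0 hs1 => by
      have := hk s ⟨hs0, hs1⟩
      simp only [this, Hk _ _ _ hk0, psi_smul])
    (fun t θ h0 h4 h => by
      rcases h with h | h
      · have := hw θ ⟨h0, h⟩
        simp only [this, Hk _ _ _ hw0, psi_smul]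
      · have := hv θ ⟨h, h4⟩
        simp only [this, Hk _ _ _ hv0, psi_smul])
  let f1 : C(X, X) := ⟨fun x => T.K (1, f x), by fun_prop⟩
  let g : C(X, X) := ⟨fun x => L (1, x), by fun_prop⟩
  let HA : ContinuousMap.Homotopy f f1 :=
    { toFun := fun p => T.K (p.1, f p.2)
      continuous_toFun := by fun_prop
      map_zero_left := fun x => T.K0 _
      map_one_left := fun x => rfl }
  let HB : ContinuousMap.Homotopy f1 g :=
    { toFun := L
      continuous_toFun := L.continuous
      map_zero_left := fun x => by
        obtain ⟨θ, s, h0, h8, hs0, hs1, rfl⟩ := pi_surj x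
        show L (0, _) = T.K (1, f _)
        rw [hL _ _ _ h0 h8 hs0 hs1, Set.Icc.coe_zero, H0, hpsi]
      map_one_left := fun x => rfl }
  have hg : ∀ x, g x ∈ Cj := fun x => by
    obtain ⟨θ, s, h0, h8, hs0, hs1, rfl⟩ := pi_surj x
    show L (1, _) ∈ Cj
    rw [hL _ _ _ h0 h8 hs0 hs1, Set.Icc.coe_one]
    exact T.psi_Lline (H1 _)
  have hA : ∀ t, ∀ x ∈ Bd, HA (t, x) ∈ Bd := fun t x hx => by
    show T.K (t, f x) ∈ Bd
    rw [T.KC _ _ (hmaps hx)]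
    exact hCj (hmaps hx)
  have hB : ∀ t, ∀ x ∈ Bd, HB (t, x) ∈ Bd := fun t x hx => by
    obtain ⟨θ, s, h0, h8, hs0, hs1, rfl⟩ := pi_surj x
    show L (t, _) ∈ Bd
    rw [hL _ _ _ h0 h8 hs0 hs1, HL _ _ (hBd θ s h0 h8 hs0 hs1 hx)]
    exact hCj (T.psi_Lline (hBd θ s h0 h8 hs0 hs1 hx))
  refine ⟨g, ⟨HA.trans HB, fun x hx t => ?_⟩, hg, fun x hx => hx ▸ hg x⟩
  rw [ContinuousMap.Homotopy.trans_apply]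
  split_ifs
  · exact hA _ x hx
  · exact hB _ x hx

end TD

/-- A boundary-essential boundary-preserving map of the punctured Möbius band whose
boundary image lies in a single boundary circle `Cj` is boundary-homotopic to a map
with image inside `Cj`; in particular every fixed point of that map lies on `Cj`. -/
theorem stmt_9 (f : C(X, X)) (hf : BoundaryPreserving f) (Cj : Set X)
    (hj : Cj = C1 ∨ Cj = C2) (hmaps : MapsTo f Bd Cj)
    (he1 : Essential (restrictMap f (hmaps.mono_left Set.subset_union_left : MapsTo f C1 Cj)))
    (he2 : Essential (restrictMap f (hmaps.mono_left Set.subset_union_right : MapsTo f C2 Cj))) :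
    ∃ g : C(X, X), BoundaryHomotopic f g ∧ (∀ x : X, g x ∈ Cj) ∧
      ∀ x : X, g x = x → x ∈ Cj := by
  rcases hj with rfl | rfl
  · exact exists_TD1.some.main f Set.subset_union_left hmaps he1 he2
  · exact exists_TD2.some.main f Set.subset_union_right hmaps he1 he2

end PMB
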